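/- Let d ≥ 1, δ ∈ (0,1], and let a : ℝ → 𝕊_δ be measurable. Then there is a constant N = N(d,δ) such that for every u ∈ C₀^∞(ℝ^{1+d}), every κ ≥ 2 and every ρ > 0, setting f = ∂_t u + Σ_{i,j} a^{ij}(t) D_{ij}u, one has osc_{C_ρ}(D²u) ≤ N κ^{(d+2)/2} ( ⨍_{C_{κρ}} |f|² dx dt )^{1/2} + N κ^{−1} 𝕄 f(0,0). -/

import Mathlib

open MeasureTheory Metric Set
open scoped ENNReal NNReal

noncomputable section

abbrev Spc (d : ℕ) : Type := EuclideanSpace ℝ (Fin d)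

abbrev Pt (d : ℕ) : Type := ℝ × Spc d

instance matrixMeasurableSpace (d : ℕ) : MeasurableSpace (Matrix (Fin d) (Fin d) ℝ) :=
  (inferInstance : MeasurableSpace (Fin d → Fin d → ℝ))

/-- Membership in `𝕊_δ`: symmetric `d×d` matrices with
`δ|ξ|² ≤ (aξ,ξ) ≤ δ⁻¹|ξ|²`. -/
def inS (d : ℕ) (δ : ℝ) (a : Matrix (Fin d) (Fin d) ℝ) : Prop :=
  a.IsSymm ∧ ∀ ξ : Fin d → ℝ,
    δ * (∑ i, ξ i ^ 2) ≤ (∑ i, ∑ j, a i j * ξ i * ξ j) ∧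
    (∑ i, ∑ j, a i j * ξ i * ξ j) ≤ δ⁻¹ * (∑ i, ξ i ^ 2)

/-- `{a,u} = a^{ij} a^{kr} u_{ik} u_{jr}`. -/
def bra (d : ℕ) (a u : Matrix (Fin d) (Fin d) ℝ) : ℝ :=
  ∑ i, ∑ j, ∑ k, ∑ r, a i j * a k r * u i k * u j r

/-- Frobenius norm of a `d×d` array. -/
def mnorm {d : ℕ} (m : Fin d → Fin d → ℝ) : ℝ :=
  Real.sqrt (∑ i, ∑ j, m i j ^ 2)

/-- Euclidean norm of a vector given as `Fin d → ℝ`. -/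
def vnorm {d : ℕ} (v : Fin d → ℝ) : ℝ :=
  Real.sqrt (∑ i, v i ^ 2)

/-- Parabolic cylinder `C_R(t,x) = (t, t+R²) × B_R(x)`. -/
def cyl (d : ℕ) (R t : ℝ) (x : Spc d) : Set (Pt d) :=
  Ioo t (t + R ^ 2) ×ˢ ball x R

/-- Time derivative `∂_t u`. -/
def Dt {d : ℕ} (u : Pt d → ℝ) (z : Pt d) : ℝ :=
  deriv (fun s => u (s, z.2)) z.1

/-- Spatial derivative `D_i u`. -/
def Dx {d : ℕ} (i : Fin d) (u : Pt d → ℝ) (z : Pt d) : ℝ :=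
  fderiv ℝ (fun y => u (z.1, y)) z.2 (EuclideanSpace.single i 1)

/-- Second spatial derivative `D_{ij} u = D_i D_j u`. -/
def Dxx {d : ℕ} (i j : Fin d) (u : Pt d → ℝ) : Pt d → ℝ :=
  Dx i (Dx j u)

/-- `u ∈ C₀^∞(ℝ^{1+d})`. -/
def CinfC {d : ℕ} (u : Pt d → ℝ) : Prop :=
  ContDiff ℝ (⊤ : ℕ∞) u ∧ HasCompactSupport u

/-- The kernel `p_{α,k}(s,r)`. -/
def pak (d : ℕ) (α k s r : ℝ) : ℝ :=
  if 0 < s then s ^ (-((d : ℝ) + 2 - α) / 2) * Real.exp (-(r ^ 2) / (k * s)) else 0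

/-- Parabolic distance to the origin `ρ(t,x) = |x| + √|t|`. -/
def prho {d : ℕ} (z : Pt d) : ℝ := ‖z.2‖ + Real.sqrt |z.1|

/-- Average of (the positive part of) `g` over `C`, valued in `ℝ≥0∞`. -/
def aveLin {d : ℕ} (C : Set (Pt d)) (g : Pt d → ℝ) : ℝ≥0∞ :=
  (volume C)⁻¹ * ∫⁻ z in C, ENNReal.ofReal (g z)

/-- Parabolic maximal function `𝕄_β g` (for `g ≥ 0`). -/
def maxF {d : ℕ} (β : ℝ) (g : Pt d → ℝ) (z : Pt d) : ℝ≥0∞ :=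
  ⨆ (ρ : ℝ) (_ : 0 < ρ) (t : ℝ) (x : Spc d) (_ : z ∈ cyl d ρ t x),
    ENNReal.ofReal (ρ ^ β) * aveLin (cyl d ρ t x) g

/-- Oscillation of a matrix-valued function over `C`. -/
def oscC {d : ℕ} (C : Set (Pt d)) (g : Pt d → Fin d → Fin d → ℝ) : ℝ :=
  ⨍ z₁ in C, ⨍ z₂ in C, mnorm (fun i j => g z₁ i j - g z₂ i j)

/-- Mixed norm `‖f‖_{𝕃_{q,p}}` (inner integration in `t`, outer in `x`). -/
def mixedNorm {d : ℕ} (q p : ℝ) (f : Pt d → ℝ) : ℝ :=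
  (∫ x : Spc d, (∫ t : ℝ, |f (t, x)| ^ q) ^ (p / q)) ^ (1 / p)

/-- Mixed norm on a set `Γ`. -/
def mixedNormOn {d : ℕ} (q p : ℝ) (Γ : Set (Pt d)) (f : Pt d → ℝ) : ℝ :=
  mixedNorm q p (Γ.indicator f)

/-- Normalized (averaged) mixed norm over the cylinder `C_R(t,x)`, in `ℝ≥0∞`. -/
def cylNormL {d : ℕ} (q p R t : ℝ) (x : Spc d) (f : Pt d → ℝ) : ℝ≥0∞ :=
  ((volume (ball x R))⁻¹ * ∫⁻ y in ball x R,
      ((volume (Ioo t (t + R ^ 2)))⁻¹ * ∫⁻ s in Ioo t (t + R ^ 2),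
        ENNReal.ofReal |f (s, y)| ^ q) ^ (p / q)) ^ (1 / p)

/-- Mixed norm on a set, valued in `ℝ≥0∞`. -/
def mixedNormLe {d : ℕ} (q p : ℝ) (Γ : Set (Pt d)) (f : Pt d → ℝ) : ℝ≥0∞ :=
  (∫⁻ x : Spc d, (∫⁻ t : ℝ, ENNReal.ofReal |Γ.indicator f (t, x)| ^ q) ^ (p / q)) ^ (1 / p)

/-- `ã_C(t)`: average of `a(t,·)` over the ball of the cylinder. -/
def aTilde {d : ℕ} (a : Pt d → Matrix (Fin d) (Fin d) ℝ) (R : ℝ) (x₀ : Spc d) (t : ℝ)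
    (i j : Fin d) : ℝ :=
  ⨍ y in ball x₀ R, a (t, y) i j

/-- The mean oscillation of `a` w.r.t. `x` over one cylinder. -/
def aSharpCyl {d : ℕ} (a : Pt d → Matrix (Fin d) (Fin d) ℝ) (R t₀ : ℝ) (x₀ : Spc d) : ℝ≥0∞ :=
  (volume (cyl d R t₀ x₀))⁻¹ * ∫⁻ z in cyl d R t₀ x₀,
    ENNReal.ofReal (mnorm (fun i j => a z i j - aTilde a R x₀ z.1 i j))

/-- `a^♯`. -/
def aSharp {d : ℕ} (a : Pt d → Matrix (Fin d) (Fin d) ℝ) : ℝ≥0∞ :=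
  ⨆ (R : ℝ) (_ : 0 < R) (t₀ : ℝ) (x₀ : Spc d), aSharpCyl a R t₀ x₀

/-- `a^♯_ρ` (only cylinders of radius `≤ ρa`). -/
def aSharpRho {d : ℕ} (a : Pt d → Matrix (Fin d) (Fin d) ℝ) (ρa : ℝ) : ℝ≥0∞ :=
  ⨆ (R : ℝ) (_ : 0 < R) (_ : R ≤ ρa) (t₀ : ℝ) (x₀ : Spc d), aSharpCyl a R t₀ x₀

/-- Homogeneous Morrey norm `‖g‖_{Ė_{p,β}}`. -/
def morreyP {d : ℕ} (p β : ℝ) (g : Pt d → ℝ) : ℝ≥0∞ :=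
  ⨆ (ρ : ℝ) (_ : 0 < ρ) (t : ℝ) (x : Spc d),
    ENNReal.ofReal (ρ ^ β) *
      ((volume (cyl d ρ t x))⁻¹ * ∫⁻ z in cyl d ρ t x, ENNReal.ofReal |g z| ^ p) ^ (1 / p)

/-- Homogeneous mixed-norm Morrey norm `‖g‖_{Ė_{q,p,β}}`. -/
def morreyQP {d : ℕ} (q p β : ℝ) (g : Pt d → ℝ) : ℝ≥0∞ :=
  ⨆ (ρ : ℝ) (_ : 0 < ρ) (t : ℝ) (x : Spc d),
    ENNReal.ofReal (ρ ^ β) * cylNormL q p ρ t x g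

/-- Inhomogeneous mixed-norm Morrey norm `‖g‖_{E_{q,p,β}}` (radii `ρ ∈ (0,1]`). -/
def morreyI {d : ℕ} (q p β : ℝ) (g : Pt d → ℝ) : ℝ≥0∞ :=
  ⨆ (ρ : ℝ) (_ : 0 < ρ) (_ : ρ ≤ 1) (t : ℝ) (x : Spc d),
    ENNReal.ofReal (ρ ^ β) * cylNormL q p ρ t x g

/-- `b̄_{q',p',ρb}` for a vector field `b`. -/
def bBar {d : ℕ} (q' p' : ℝ) (b : Pt d → Fin d → ℝ) (ρb : ℝ) : ℝ≥0∞ :=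
  ⨆ (R : ℝ) (_ : 0 < R) (_ : R ≤ ρb) (t : ℝ) (x : Spc d),
    ENNReal.ofReal R * cylNormL q' p' R t x (fun z => vnorm (b z))

/-- Test function supported in the open set `Q`. -/
def IsTest {d : ℕ} (Q : Set (Pt d)) (φ : Pt d → ℝ) : Prop :=
  ContDiff ℝ (⊤ : ℕ∞) φ ∧ HasCompactSupport φ ∧ tsupport φ ⊆ Q

/-- `ut` is the weak time derivative of `u` on `Q`. -/
def WeakDtOn {d : ℕ} (Q : Set (Pt d)) (u ut : Pt d → ℝ) : Prop :=
  ∀ φ, IsTest Q φ → ∫ z in Q, u z * Dt φ z = - ∫ z in Q, ut z * φ z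

/-- `ui` is the weak `i`-th spatial derivative of `u` on `Q`. -/
def WeakDxOn {d : ℕ} (Q : Set (Pt d)) (i : Fin d) (u ui : Pt d → ℝ) : Prop :=
  ∀ φ, IsTest Q φ → ∫ z in Q, u z * Dx i φ z = - ∫ z in Q, ui z * φ z

open Real in
def ph (r : ℝ) : ℂ := Complex.exp (((2 * π * r : ℝ) : ℂ) * Complex.I)

lemma ph_norm (r : ℝ) : ‖ph r‖ = 1 := Complex.norm_exp_ofReal_mul_I _

lemma ph_enorm (r : ℝ) : ‖ph r‖ₑ = 1 := by
  rw [← ofReal_norm, ph_norm]; simp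

lemma ph_cont : Continuous ph := by unfold ph; fun_prop

lemma ph_add (a b : ℝ) : ph (a + b) = ph a * ph b := by
  unfold ph; rw [← Complex.exp_add]; congr 1; push_cast; ring

lemma ph_conj (a : ℝ) : (starRingEnd ℂ) (ph a) = ph (-a) := by
  unfold ph; rw [← Complex.exp_conj]; congr 1; rw [map_mul, Complex.conj_ofReal, Complex.conj_I]; push_cast; ring

def gam {d : ℕ} (c : ℝ) (z : Spc d) : ℝ :=
  (Real.pi / c) ^ ((d : ℝ) / 2) * Real.exp (-(Real.pi ^ 2 / c) * ‖z‖ ^ 2)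

lemma gam_nonneg {d : ℕ} {c : ℝ} (hc : 0 < c) (z : Spc d) : 0 ≤ gam c z := by
  unfold gam; have := Real.pi_pos; positivity

lemma gauss_integrable {d : ℕ} {c : ℝ} (hc : 0 < c) :
    Integrable (fun x : Spc d => Real.exp (-c * ‖x‖ ^ 2)) := by
  have := GaussianFourier.integrable_cexp_neg_mul_sq_norm_add (V := Spc d) (b := (c : ℂ))
    (by simpa using hc) 0 0
  have h2 := this.norm
  refine h2.congr (Filter.Eventually.of_forall fun x => ?_)
  simp only [Complex.norm_exp]
  congr 1
  simp [← Complex.ofReal_pow]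

lemma gam_integrable {d : ℕ} {c : ℝ} (hc : 0 < c) :
    Integrable (fun x : Spc d => gam c x) := by
  unfold gam
  exact (gauss_integrable (by have := Real.pi_pos; positivity)).const_mul _

lemma gam_integral {d : ℕ} {c : ℝ} (hc : 0 < c) : ∫ x : Spc d, gam c x = 1 := by
  unfold gam
  have hp := Real.pi_pos
  rw [integral_const_mul, GaussianFourier.integral_rexp_neg_mul_sq_norm (by positivity), finrank_euclideanSpace_fin]
  rw [← Real.mul_rpow (by positivity) (by positivity)]
  have : Real.pi / c * (Real.pi / (Real.pi ^ 2 / c)) = 1 := by field_simp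
  rw [this]; simp

lemma gam_lint {d : ℕ} {c : ℝ} (hc : 0 < c) : ∫⁻ x : Spc d, ENNReal.ofReal (gam c x) = 1 := by
  rw [← ofReal_integral_eq_lintegral_ofReal (gam_integrable hc)
    (Filter.Eventually.of_forall fun x => gam_nonneg hc x), gam_integral hc]; simp

lemma gam_eq {d : ℕ} {c : ℝ} (hc : 0 < c) (z : Spc d) :
    ∫ x : Spc d, (Real.exp (-c * ‖x‖ ^ 2) : ℂ) * ph (inner ℝ x z) = (gam c z : ℂ) := by
  have := GaussianFourier.integral_cexp_neg_mul_sq_norm_add (V := Spc d) (b := (c : ℂ))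
    (by simpa using hc) (2 * Real.pi * Complex.I) z
  have hp := Real.pi_pos
  convert this using 1
  · congr 1; ext x
    unfold ph
    rw [Complex.ofReal_exp, ← Complex.exp_add]
    congr 1
    rw [real_inner_comm]
    push_cast; ring
  · unfold gam
    rw [Complex.ofReal_mul, Complex.ofReal_exp, Complex.ofReal_cpow (by positivity)]
    congr 1
    · simp
    · congr 1
      have : (c : ℂ) ≠ 0 := by exact_mod_cast hc.ne'
      push_cast
      rw [mul_pow, mul_pow, Complex.I_sq]
      field_simp
      ring

lemma gam_cont {d : ℕ} (c : ℝ) : Continuous (gam (d := d) c) := by unfold gam; fun_prop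

lemma bessel_c {d : ℕ} {F : Spc d → ℂ} (hF : Integrable F) {c : ℝ} (hc : 0 < c) :
    ∫⁻ x : Spc d, ENNReal.ofReal (Real.exp (-c * ‖x‖ ^ 2)) *
      ‖∫ y, ph (inner ℝ x y) * F y‖ₑ ^ 2 ≤ ∫⁻ y, ‖F y‖ₑ ^ 2 := by
  set w : Spc d → ℝ := fun x => Real.exp (-c * ‖x‖ ^ 2) with hw
  have hwc : Continuous w := by fun_prop
  have hwi : Integrable w := gauss_integrable hc
  set Fh : Spc d → ℂ := fun x => ∫ y, ph (inner ℝ x y) * F y with hFh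
  have hphF : ∀ x : Spc d, Integrable (fun y => ph (inner ℝ x y) * F y) := fun x => by
    refine hF.bdd_mul (c := 1) (by
      exact (ph_cont.comp (by fun_prop)).aestronglyMeasurable) ?_
    exact Filter.Eventually.of_forall fun y => by simp [ph_norm]
  have hFhb : ∀ x, ‖Fh x‖ ≤ ∫ y, ‖F y‖ := fun x => by
    refine (norm_integral_le_integral_norm _).trans (le_of_eq ?_)
    congr 1; ext y; simp [ph_norm]
  have hFc : Continuous Fh := by
    refine continuous_of_dominated (bound := fun y => ‖F y‖) ?_ ?_ hF.norm ?_
    · intro x; exact (hphF x).aestronglyMeasurable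
    · intro x; exact Filter.Eventually.of_forall fun y => by simp [ph_norm]
    · exact Filter.Eventually.of_forall fun y =>
        (ph_cont.comp (by fun_prop)).mul continuous_const
  -- the key identity
  have hFF : Integrable (fun p : Spc d × Spc d => F p.1 * (starRingEnd ℂ) (F p.2))
      (volume.prod volume) := by
    refine Integrable.mul_prod (g := fun y => (starRingEnd ℂ) (F y)) hF ?_
    exact (Complex.conjCLE : ℂ →L[ℝ] ℂ).integrable_comp hF
  have key : ∫ x, ((w x : ℝ) : ℂ) * (Fh x * (starRingEnd ℂ) (Fh x)) =
      ∫ p : Spc d × Spc d, (F p.1 * (starRingEnd ℂ) (F p.2)) * (gam c (p.1 - p.2) : ℂ)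
        ∂(volume.prod volume) := by
    have h1 : ∀ x, ((w x : ℝ) : ℂ) * (Fh x * (starRingEnd ℂ) (Fh x)) =
        ∫ p : Spc d × Spc d, (w x : ℂ) * (ph (inner ℝ x (p.1 - p.2)) *
          (F p.1 * (starRingEnd ℂ) (F p.2))) ∂(volume.prod volume) := by
      intro x
      rw [integral_const_mul]
      congr 1
      have e2 : (starRingEnd ℂ) (Fh x) = ∫ y, (starRingEnd ℂ) (ph (inner ℝ x y) * F y) := by
        rw [hFh]; exact integral_conj.symm
      rw [e2, hFh]
      simp only
      rw [← integral_prod_mul]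
      congr 1; ext p
      rw [inner_sub_right, sub_eq_add_neg, ph_add, map_mul, ph_conj]; ring
    simp_rw [h1]
    rw [integral_integral_swap]
    · congr 1; ext p
      rw [← gam_eq hc, ← integral_const_mul]
      congr 1; ext x
      simp only [hw]; ring
    · have hh : Integrable (fun q : Spc d × (Spc d × Spc d) =>
          (w q.1 : ℂ) * (F q.2.1 * (starRingEnd ℂ) (F q.2.2)))
          (volume.prod (volume.prod volume)) := Integrable.mul_prod hwi.ofReal hFF
      have := hh.bdd_mul (c := 1) (f := fun q => ph (inner ℝ q.1 (q.2.1 - q.2.2)))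
        (by exact (ph_cont.comp (by fun_prop)).aestronglyMeasurable)
        (Filter.Eventually.of_forall fun y => by simp [ph_norm])
      refine this.congr (Filter.Eventually.of_forall fun q => ?_)
      simp only [Function.uncurry]; ring
  have hint : Integrable (fun x => w x * ‖Fh x‖ ^ 2) := by
    refine hwi.mul_bdd (c := (∫ y, ‖F y‖) ^ 2) (by
      exact (hFc.norm.pow 2).aestronglyMeasurable) ?_
    refine Filter.Eventually.of_forall fun y => ?_
    rw [norm_pow, norm_norm]
    gcongr; exact hFhb y
  have hl : ∫⁻ x : Spc d, ENNReal.ofReal (w x) * ‖Fh x‖ₑ ^ 2 =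
      ‖∫ x, ((w x : ℝ) : ℂ) * (Fh x * (starRingEnd ℂ) (Fh x))‖ₑ := by
    have e1 : ∫ x, ((w x : ℝ) : ℂ) * (Fh x * (starRingEnd ℂ) (Fh x)) =
        ((∫ x, w x * ‖Fh x‖ ^ 2 : ℝ) : ℂ) := by
      rw [← integral_complex_ofReal]
      congr 1; ext x
      rw [Complex.mul_conj, Complex.normSq_eq_norm_sq]; push_cast; ring
    rw [e1, ← ofReal_norm, Complex.norm_real, Real.norm_of_nonneg (integral_nonneg fun x => by
      simp only [hw]; positivity)]
    rw [ofReal_integral_eq_lintegral_ofReal hint (Filter.Eventually.of_forall fun x => by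
      simp only [hw]; positivity)]
    congr 1; ext x
    rw [ENNReal.ofReal_mul (by simp only [hw]; positivity), ENNReal.ofReal_pow (norm_nonneg _),
      ofReal_norm]
  rw [hl, key]
  refine (enorm_integral_le_lintegral_enorm _).trans ?_
  have hFm : AEMeasurable (fun y => ‖F y‖ₑ ^ 2) volume := (hF.aestronglyMeasurable.enorm.pow_const 2)
  have gm : Measurable fun z : Spc d => ENNReal.ofReal (gam c z) :=
    ((gam_cont c).measurable).ennreal_ofReal
  have b1 : ∀ p : Spc d × Spc d,
      ‖(F p.1 * (starRingEnd ℂ) (F p.2)) * (gam c (p.1 - p.2) : ℂ)‖ₑ ≤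
      2⁻¹ * (‖F p.1‖ₑ ^ 2 * ENNReal.ofReal (gam c (p.1 - p.2))) +
      2⁻¹ * (‖F p.2‖ₑ ^ 2 * ENNReal.ofReal (gam c (p.1 - p.2))) := by
    intro p
    have : ‖(F p.1 * (starRingEnd ℂ) (F p.2)) * (gam c (p.1 - p.2) : ℂ)‖ₑ =
        ENNReal.ofReal (‖F p.1‖ * ‖F p.2‖ * gam c (p.1 - p.2)) := by
      rw [← ofReal_norm]; congr 1
      simp [abs_of_nonneg (gam_nonneg hc (p.1 - p.2))]
    rw [this]
    have i2 : (2⁻¹ : ℝ≥0∞) = ENNReal.ofReal (2⁻¹) := by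
      rw [ENNReal.ofReal_inv_of_pos (by norm_num)]; simp
    rw [i2]
    have g0 := gam_nonneg hc (p.1 - p.2)
    simp only [← ofReal_norm]
    rw [← ENNReal.ofReal_pow (norm_nonneg _), ← ENNReal.ofReal_pow (norm_nonneg _),
      ← ENNReal.ofReal_mul (by positivity), ← ENNReal.ofReal_mul (by positivity),
      ← ENNReal.ofReal_mul (by positivity), ← ENNReal.ofReal_mul (by positivity),
      ← ENNReal.ofReal_add (by positivity) (by positivity)]
    apply ENNReal.ofReal_le_ofReal
    nlinarith [mul_nonneg g0 (sq_nonneg (‖F p.1‖ - ‖F p.2‖))]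
  have m1 : AEMeasurable (fun p : Spc d × Spc d =>
      (‖F p.1‖ₑ ^ 2 * ENNReal.ofReal (gam c (p.1 - p.2)))) (volume.prod volume) := by
    refine AEMeasurable.fun_mul ?_ ?_
    · exact hFm.comp_quasiMeasurePreserving Measure.quasiMeasurePreserving_fst
    · exact (gm.comp (by fun_prop)).aemeasurable
  have m2 : AEMeasurable (fun p : Spc d × Spc d =>
      (‖F p.2‖ₑ ^ 2 * ENNReal.ofReal (gam c (p.1 - p.2)))) (volume.prod volume) := by
    refine AEMeasurable.fun_mul ?_ ?_
    · exact hFm.comp_quasiMeasurePreserving Measure.quasiMeasurePreserving_snd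
    · exact (gm.comp (by fun_prop)).aemeasurable
  refine (lintegral_mono b1).trans ?_
  rw [lintegral_add_left' (m1.const_mul _), lintegral_const_mul'' _ m1, lintegral_const_mul'' _ m2]
  have e1 : ∫⁻ p : Spc d × Spc d, (‖F p.1‖ₑ ^ 2 * ENNReal.ofReal (gam c (p.1 - p.2)))
      ∂(volume.prod volume) = ∫⁻ y, ‖F y‖ₑ ^ 2 := by
    rw [lintegral_prod _ m1]
    congr 1; ext y
    dsimp only
    rw [lintegral_const_mul _ (f := fun x => ENNReal.ofReal (gam c (y - x)))
        (gm.comp (by fun_prop)),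
      lintegral_sub_left_eq_self (fun z : Spc d => ENNReal.ofReal (gam c z)) y, gam_lint hc, mul_one]
  have e2 : ∫⁻ p : Spc d × Spc d, (‖F p.2‖ₑ ^ 2 * ENNReal.ofReal (gam c (p.1 - p.2)))
      ∂(volume.prod volume) = ∫⁻ y, ‖F y‖ₑ ^ 2 := by
    rw [lintegral_prod_symm _ m2]
    congr 1; ext y
    dsimp only
    rw [lintegral_const_mul _ (f := fun x => ENNReal.ofReal (gam c (x - y)))
        (gm.comp (by fun_prop)),
      lintegral_sub_right_eq_self (fun z : Spc d => ENNReal.ofReal (gam c z)) y, gam_lint hc, mul_one]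
  rw [e1, e2, ← add_mul, ENNReal.inv_two_add_inv_two, one_mul]

lemma bessel {d : ℕ} {F : Spc d → ℂ} (hF : Integrable F) :
    ∫⁻ x : Spc d, ‖∫ y, ph (inner ℝ x y) * F y‖ₑ ^ 2 ≤ ∫⁻ y, ‖F y‖ₑ ^ 2 := by
  set Fh : Spc d → ℂ := fun x => ∫ y, ph (inner ℝ x y) * F y with hFh
  have hFc : Continuous Fh := by
    refine continuous_of_dominated (bound := fun y => ‖F y‖) ?_ ?_ hF.norm ?_
    · intro x; exact ((ph_cont.comp (by fun_prop)).aestronglyMeasurable).mul hF.1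
    · intro x; exact Filter.Eventually.of_forall fun y => by simp [ph_norm]
    · exact Filter.Eventually.of_forall fun y =>
        (ph_cont.comp (by fun_prop)).mul continuous_const
  have h1 : ∀ x, ‖Fh x‖ₑ ^ 2 = Filter.liminf (fun n : ℕ =>
      ENNReal.ofReal (Real.exp (-(1 / ((n : ℝ) + 1)) * ‖x‖ ^ 2)) * ‖Fh x‖ₑ ^ 2) Filter.atTop := by
    intro x
    symm
    apply Filter.Tendsto.liminf_eq
    have t1 : Filter.Tendsto (fun n : ℕ => Real.exp (-(1 / ((n : ℝ) + 1)) * ‖x‖ ^ 2))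
        Filter.atTop (nhds 1) := by
      have := ((tendsto_one_div_add_atTop_nhds_zero_nat (𝕜 := ℝ)).neg.mul_const (‖x‖ ^ 2))
      have := (Real.continuous_exp.tendsto _).comp this
      simpa [Function.comp_def] using this
    have t2 := ENNReal.tendsto_ofReal t1
    have := ENNReal.Tendsto.mul_const (b := ‖Fh x‖ₑ ^ 2) t2 (Or.inl (by simp))
    simpa using this
  calc ∫⁻ x : Spc d, ‖Fh x‖ₑ ^ 2 = _ := lintegral_congr h1
    _ ≤ _ := lintegral_liminf_le' (fun n => by
        refine AEMeasurable.fun_mul ?_ ?_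
        · exact (Continuous.measurable (by fun_prop)).ennreal_ofReal.aemeasurable
        · exact (hFc.measurable.enorm.pow_const 2).aemeasurable)
    _ ≤ Filter.liminf (fun n : ℕ => ∫⁻ y, ‖F y‖ₑ ^ 2) Filter.atTop := by
        refine Filter.liminf_le_liminf (Filter.Eventually.of_forall fun n => ?_)
        exact bessel_c hF (by positivity)
    _ = _ := by simp

lemma bessel_neg {d : ℕ} {F : Spc d → ℂ} (hF : Integrable F) :
    ∫⁻ x : Spc d, ‖∫ y, ph (-inner ℝ x y) * F y‖ₑ ^ 2 ≤ ∫⁻ y, ‖F y‖ₑ ^ 2 := by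
  have := bessel hF
  rw [← lintegral_neg_eq_self] at this
  simpa using this

def qf {d : ℕ} (A : Fin d → Fin d → ℝ) (ξ : Spc d) : ℝ := ∑ i, ∑ j, A i j * ξ i * ξ j

def qs {d : ℕ} (A : Fin d → Fin d → ℝ) (ξ η : Spc d) : ℝ :=
  ∑ i, ∑ j, A i j * (ξ i * η j + η i * ξ j)

def mon {d : ℕ} (L : List (Fin d)) (ξ : Spc d) : ℝ := (L.map fun i => ξ i).prod

def JJ {d : ℕ} (L : List (Fin d)) (A : Fin d → Fin d → ℝ) (x : Spc d) : ℂ :=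
  ∫ ξ : Spc d, ((mon L ξ * Real.exp (-qf A ξ) : ℝ) : ℂ) * ph (inner ℝ x ξ)

def Ell {d : ℕ} (l u : ℝ) (A : Fin d → Fin d → ℝ) : Prop :=
  ∀ ξ : Spc d, l * ‖ξ‖ ^ 2 ≤ qf A ξ ∧ qf A ξ ≤ u * ‖ξ‖ ^ 2

lemma pow_le_exp_sq (m : ℕ) {b c r : ℝ} (hb : 0 < b) (hc : 0 ≤ c) (hr : 0 ≤ r) :
    (r + c) ^ m ≤ (m.factorial * Real.exp (c + 1 / (4 * b))) * Real.exp (b * r ^ 2) := by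
  have h1 := Real.pow_div_factorial_le_exp (r + c) (by positivity) m
  rw [div_le_iff₀ (by positivity)] at h1
  have h2 : Real.exp (r + c) ≤ Real.exp (c + 1 / (4 * b)) * Real.exp (b * r ^ 2) := by
    rw [← Real.exp_add]
    apply Real.exp_le_exp.2
    have h3 : 0 ≤ b * (r - 1 / (2 * b)) ^ 2 := by positivity
    have h4 : b * (r - 1 / (2 * b)) ^ 2 = b * r ^ 2 - r + 1 / (4 * b) := by field_simp; ring
    linarith
  calc (r + c) ^ m ≤ Real.exp (r + c) * m.factorial := h1
    _ ≤ (Real.exp (c + 1 / (4 * b)) * Real.exp (b * r ^ 2)) * m.factorial := by gcongr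
    _ = _ := by ring

lemma poly_gauss_integrable {d : ℕ} (m : ℕ) {b c : ℝ} (hb : 0 < b) (hc : 0 ≤ c) :
    Integrable (fun x : Spc d => (‖x‖ + c) ^ m * Real.exp (-b * ‖x‖ ^ 2)) := by
  have := (gauss_integrable (d := d) (c := b / 2) (by positivity)).const_mul
    (m.factorial * Real.exp (c + 1 / (4 * (b / 2))))
  refine this.mono' (by exact (Continuous.aestronglyMeasurable (by fun_prop))) ?_
  refine Filter.Eventually.of_forall fun x => ?_
  rw [Real.norm_of_nonneg (by positivity)]
  have h := pow_le_exp_sq m (b := b / 2) (by positivity) hc (norm_nonneg x)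
  calc _ ≤ (m.factorial * Real.exp (c + 1 / (4 * (b / 2)))) * Real.exp (b / 2 * ‖x‖ ^ 2)
        * Real.exp (-b * ‖x‖ ^ 2) := by gcongr
    _ = _ := by
      rw [mul_assoc, ← Real.exp_add]; congr 2; ring

lemma coord_le {d : ℕ} (ξ : Spc d) (i : Fin d) : |ξ i| ≤ ‖ξ‖ := by
  have := PiLp.norm_apply_le ξ i
  simpa using this

lemma mon_cont {d : ℕ} (L : List (Fin d)) : Continuous (mon L) := by
  unfold mon
  induction L with
  | nil => simp; fun_prop
  | cons a L ih => simp only [List.map_cons, List.prod_cons]; exact (by fun_prop : Continuous fun ξ : Spc d => ξ a).mul ih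

lemma mon_le {d : ℕ} (L : List (Fin d)) (ξ : Spc d) : |mon L ξ| ≤ ‖ξ‖ ^ L.length := by
  unfold mon
  induction L with
  | nil => simp
  | cons a L ih =>
    simp only [List.map_cons, List.prod_cons, List.length_cons, abs_mul, pow_succ']
    gcongr
    exact coord_le ξ a

lemma qf_cont {d : ℕ} (A : Fin d → Fin d → ℝ) : Continuous (qf A) := by unfold qf; fun_prop
lemma qs_cont {d : ℕ} (A : Fin d → Fin d → ℝ) (η : Spc d) : Continuous (fun ξ => qs A ξ η) := by
  unfold qs; fun_prop

lemma qf_add_smul {d : ℕ} (A : Fin d → Fin d → ℝ) (ξ η : Spc d) (a : ℝ) :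
    qf A (ξ + a • η) = qf A ξ + a * qs A ξ η + a ^ 2 * qf A η := by
  unfold qf qs
  simp only [Finset.mul_sum, ← Finset.sum_add_distrib]
  refine Finset.sum_congr rfl fun i _ => Finset.sum_congr rfl fun j _ => ?_
  simp; ring

/-- complexified integrand -/
def FF {d : ℕ} (L : List (Fin d)) (A : Fin d → Fin d → ℝ) (x η ξ : Spc d) (z : ℂ) : ℂ :=
  (L.map fun i => ((ξ i : ℂ) + z * (η i : ℂ))).prod *
    Complex.exp (2 * Real.pi * Complex.I * ((inner ℝ x ξ : ℝ) + z * (inner ℝ x η : ℝ)) -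
      ((qf A ξ : ℝ) + z * (qs A ξ η : ℝ) + z ^ 2 * (qf A η : ℝ)))

lemma FF_real {d : ℕ} (L : List (Fin d)) (A : Fin d → Fin d → ℝ) (x η ξ : Spc d) (a : ℝ) :
    FF L A x η ξ (a : ℂ) = ((mon L (ξ + a • η) * Real.exp (-qf A (ξ + a • η)) : ℝ) : ℂ) *
      ph (inner ℝ x (ξ + a • η)) := by
  unfold FF ph
  rw [Complex.ofReal_mul, mul_assoc (mon L (ξ + a • η) : ℂ), Complex.ofReal_exp, ← Complex.exp_add, qf_add_smul]
  congr 1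
  · unfold mon
    induction L with
    | nil => simp
    | cons b L ih => simp only [List.map_cons, List.prod_cons, Complex.ofReal_mul, ih]; simp
  · congr 1
    rw [inner_add_right, inner_smul_right]
    push_cast; ring

lemma FF_diff {d : ℕ} (L : List (Fin d)) (A : Fin d → Fin d → ℝ) (x η ξ : Spc d) :
    Differentiable ℂ (FF L A x η ξ) := by
  unfold FF
  refine Differentiable.mul ?_ (by fun_prop)
  induction L with
  | nil => simp
  | cons b L ih => simp only [List.map_cons, List.prod_cons]; exact (by fun_prop : Differentiable ℂ fun z : ℂ => ((ξ b : ℂ) + z * (η b : ℂ))).mul ih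

lemma FF_cont {d : ℕ} (L : List (Fin d)) (A : Fin d → Fin d → ℝ) (x η : Spc d) (z : ℂ) :
    Continuous (fun ξ => FF L A x η ξ z) := by
  unfold FF
  have := qf_cont A
  have := qs_cont A η
  refine Continuous.mul ?_ (by fun_prop)
  induction L with
  | nil => simp; fun_prop
  | cons b L ih =>
    simp only [List.map_cons, List.prod_cons]
    refine Continuous.mul ?_ ih
    have : Continuous fun ξ : Spc d => ξ b := by fun_prop
    fun_prop

lemma FF_norm {d : ℕ} (L : List (Fin d)) (A : Fin d → Fin d → ℝ) (x η ξ : Spc d) (z : ℂ) :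
    ‖FF L A x η ξ z‖ ≤ (‖ξ‖ + ‖z‖ * ‖η‖) ^ L.length *
      Real.exp (-(2 * Real.pi * z.im * inner ℝ x η) + z.im ^ 2 * qf A η - qf A (ξ + z.re • η)) := by
  unfold FF
  rw [norm_mul, Complex.norm_exp]
  have e : (2 * Real.pi * Complex.I * ((inner ℝ x ξ : ℝ) + z * (inner ℝ x η : ℝ)) -
      ((qf A ξ : ℝ) + z * (qs A ξ η : ℝ) + z ^ 2 * (qf A η : ℝ)) : ℂ).re =
      (-(2 * Real.pi * z.im * inner ℝ x η) + z.im ^ 2 * qf A η - qf A (ξ + z.re • η)) := by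
    rw [qf_add_smul]
    simp [pow_two]
    ring
  rw [e]
  gcongr
  induction L with
  | nil => simp
  | cons b L ih =>
    simp only [List.map_cons, List.prod_cons, List.length_cons, pow_succ', norm_mul]
    gcongr
    refine (norm_add_le _ _).trans ?_
    rw [norm_mul, Complex.norm_real, Complex.norm_real]
    gcongr
    · exact coord_le ξ b
    · exact coord_le η b

lemma FF_bound {d : ℕ} (L : List (Fin d)) {A : Fin d → Fin d → ℝ} (x η : Spc d) {l u : ℝ}
    (hl : 0 < l) (hA : Ell l u A) (R : ℝ) (hR : 0 ≤ R) :
    ∃ C : ℝ, ∀ ξ z, ‖z‖ ≤ R → ‖FF L A x η ξ z‖ ≤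
      C * ((‖ξ‖ + R * ‖η‖) ^ L.length * Real.exp (-(l / 2) * ‖ξ‖ ^ 2)) := by
  refine ⟨Real.exp (2 * Real.pi * R * |inner ℝ x η| + R ^ 2 * qf A η + l * (R ^ 2 * ‖η‖ ^ 2)),
    fun ξ z hz => (FF_norm L A x η ξ z).trans ?_⟩
  have him := (Complex.abs_im_le_norm z).trans hz
  have hre := (Complex.abs_re_le_norm z).trans hz
  have q0 : 0 ≤ qf A η := le_trans (by positivity) (hA η).1
  rw [mul_left_comm, ← Real.exp_add]
  gcongr
  have h1 : -(2 * Real.pi * z.im * inner ℝ x η) ≤ 2 * Real.pi * R * |inner ℝ x η| := by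
    refine (neg_le_abs _).trans ?_
    rw [abs_mul, abs_mul, abs_of_pos (by positivity : 0 < 2 * Real.pi)]
    gcongr
  have h2 : z.im ^ 2 ≤ R ^ 2 := by rw [← sq_abs]; gcongr
  have h2' : z.re ^ 2 ≤ R ^ 2 := by rw [← sq_abs]; gcongr
  have h3 := (hA (ξ + z.re • η)).1
  have h4 : ‖ξ‖ ^ 2 / 2 - R ^ 2 * ‖η‖ ^ 2 ≤ ‖ξ + z.re • η‖ ^ 2 := by
    have h5 : ‖ξ‖ ≤ ‖ξ + z.re • η‖ + ‖z.re • η‖ := by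
      have := norm_sub_le (ξ + z.re • η) (z.re • η)
      simpa using this
    have h6 : ‖z.re • η‖ ^ 2 ≤ R ^ 2 * ‖η‖ ^ 2 := by
      rw [norm_smul, mul_pow, Real.norm_eq_abs, sq_abs]; gcongr
    have h7 : ‖ξ‖ ^ 2 ≤ (‖ξ + z.re • η‖ + ‖z.re • η‖) ^ 2 := by gcongr
    nlinarith [sq_nonneg (‖ξ + z.re • η‖ - ‖z.re • η‖)]
  have h8 : l * (‖ξ‖ ^ 2 / 2 - R ^ 2 * ‖η‖ ^ 2) ≤ l * ‖ξ + z.re • η‖ ^ 2 := by gcongr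
  have h9 : z.im ^ 2 * qf A η ≤ R ^ 2 * qf A η := by gcongr
  linarith

lemma JJ_shift {d : ℕ} (L : List (Fin d)) {A : Fin d → Fin d → ℝ} (x η : Spc d) {l u : ℝ}
    (hl : 0 < l) (hA : Ell l u A) :
    JJ L A x = ∫ ξ, FF L A x η ξ Complex.I := by
  set G : ℂ → ℂ := fun z => ∫ ξ, FF L A x η ξ z with hG
  have hGd : Differentiable ℂ G := by
    intro z₀
    obtain ⟨C, hC⟩ := FF_bound L x η hl hA (‖z₀‖ + 2) (by positivity)
    have hbi : Integrable (fun ξ : Spc d => C * ((‖ξ‖ + (‖z₀‖ + 2) * ‖η‖) ^ L.length *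
      Real.exp (-(l / 2) * ‖ξ‖ ^ 2))) :=
      (poly_gauss_integrable _ (by positivity) (by positivity)).const_mul _
    have := hasDerivAt_integral_of_dominated_loc_of_deriv_le (μ := volume) (s := ball z₀ 1)
      (F := fun z ξ => FF L A x η ξ z) (F' := fun z ξ => deriv (FF L A x η ξ) z) (x₀ := z₀)
      (bound := fun ξ : Spc d => C * ((‖ξ‖ + (‖z₀‖ + 2) * ‖η‖) ^ L.length *
        Real.exp (-(l / 2) * ‖ξ‖ ^ 2))) (ball_mem_nhds _ one_pos)
      (Filter.Eventually.of_forall fun z => (FF_cont L A x η z).aestronglyMeasurable)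
      (hbi.mono' (FF_cont L A x η z₀).aestronglyMeasurable
        (Filter.Eventually.of_forall fun ξ => hC ξ z₀ (by linarith)))
      ?_ ?_ hbi ?_
    · exact this.2.differentiableAt
    · -- measurability of the derivative
      have hm : Measurable (fun ξ => deriv (FF L A x η ξ) z₀) := by
        have hlim : ∀ ξ, Filter.Tendsto (fun n : ℕ => ((n : ℂ) + 1) *
            (FF L A x η ξ (z₀ + 1 / ((n : ℂ) + 1)) - FF L A x η ξ z₀)) Filter.atTop
            (nhds (deriv (FF L A x η ξ) z₀)) := by
          intro ξ
          have hd := ((FF_diff L A x η ξ) z₀).hasDerivAt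
          rw [hasDerivAt_iff_tendsto_slope_zero] at hd
          have ht : Filter.Tendsto (fun n : ℕ => 1 / ((n : ℂ) + 1)) Filter.atTop
              (nhdsWithin 0 {0}ᶜ) := by
            refine tendsto_nhdsWithin_iff.2 ⟨tendsto_one_div_add_atTop_nhds_zero_nat (𝕜 := ℂ), ?_⟩
            refine Filter.Eventually.of_forall fun n => ?_
            have : ((n : ℂ) + 1) ≠ 0 := by exact_mod_cast Nat.succ_ne_zero n
            simpa using this
          have := hd.comp ht
          simpa [Function.comp_def] using this
        refine measurable_of_tendsto_metrizable (f := fun n ξ => ((n : ℂ) + 1) *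
            (FF L A x η ξ (z₀ + 1 / ((n : ℂ) + 1)) - FF L A x η ξ z₀)) (fun n => ?_)
          (tendsto_pi_nhds.2 hlim)
        exact (((FF_cont L A x η _).sub (FF_cont L A x η _)).const_mul _).measurable
      exact hm.aestronglyMeasurable
    · refine Filter.Eventually.of_forall fun ξ z hz => ?_
      have := Complex.norm_deriv_le_of_forall_mem_sphere_norm_le (c := z) (R := 1)
        (f := FF L A x η ξ) one_pos ((FF_diff L A x η ξ).diffContOnCl)
        (C := C * ((‖ξ‖ + (‖z₀‖ + 2) * ‖η‖) ^ L.length * Real.exp (-(l / 2) * ‖ξ‖ ^ 2)))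
        (fun w hw => by
          refine hC ξ w ?_
          rw [mem_ball, dist_eq_norm] at hz
          rw [mem_sphere, dist_eq_norm] at hw
          have a1 := norm_add_le (w - z) z
          have a2 := norm_add_le (z - z₀) z₀
          simp only [sub_add_cancel] at a1 a2
          linarith)
      simpa using this
    · exact Filter.Eventually.of_forall fun ξ z hz => ((FF_diff L A x η ξ) z).hasDerivAt
  have hreal : ∀ a : ℝ, G (a : ℂ) = JJ L A x := by
    intro a
    simp only [hG, FF_real]
    rw [integral_add_right_eq_self (fun ξ : Spc d =>
      ((mon L ξ * Real.exp (-qf A ξ) : ℝ) : ℂ) * ph (inner ℝ x ξ)) (a • η)]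
    rfl
  have hconst : G = fun _ => JJ L A x := by
    refine AnalyticOnNhd.eq_of_frequently_eq (z₀ := 0)
      (f := G) (g := fun _ => JJ L A x) ?_ ?_ ?_
    · exact fun z _ => hGd.analyticAt z
    · exact fun z _ => analyticAt_const
    · have ht : Filter.Tendsto (fun n : ℕ => (((1 / ((n : ℝ) + 1) : ℝ)) : ℂ)) Filter.atTop
          (nhdsWithin 0 {0}ᶜ) := by
        refine tendsto_nhdsWithin_iff.2 ⟨?_, ?_⟩
        · have := (tendsto_one_div_add_atTop_nhds_zero_nat (𝕜 := ℝ))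
          have := (Complex.continuous_ofReal.tendsto 0).comp this
          simpa [Function.comp_def] using this
        · refine Filter.Eventually.of_forall fun n => ?_
          have : (1 / ((n : ℝ) + 1) : ℝ) ≠ 0 := by positivity
          simp only [mem_compl_iff, mem_singleton_iff]
          exact_mod_cast this
      exact ht.frequently (Filter.Frequently.of_forall fun n => hreal _)
  exact (congrFun hconst Complex.I).symm

lemma JJ_decay1 {d : ℕ} {l u : ℝ} (hl : 0 < l) (hu : 0 < u) (m M : ℕ) :
    ∃ N : ℝ, 0 < N ∧ ∀ (L : List (Fin d)), L.length = m → ∀ A : Fin d → Fin d → ℝ,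
      Ell l u A → ∀ x, ‖JJ L A x‖ * (1 + ‖x‖) ^ M ≤ N := by
  have hp := Real.pi_pos
  set μ : ℝ := Real.pi / u with hμ
  have hμ0 : 0 < μ := by positivity
  set b : ℝ := Real.pi ^ 2 / u with hb
  have hb0 : 0 < b := by positivity
  set I0 : ℝ := ∫ ξ : Spc d, (‖ξ‖ + 1) ^ m * Real.exp (-l * ‖ξ‖ ^ 2) with hI0
  have hI0' : 0 ≤ I0 := integral_nonneg fun ξ => by positivity
  set C1 : ℝ := (((m + M).factorial) * Real.exp (1 + 1 / (4 * b))) with hC1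
  have hC1' : 0 ≤ C1 := by positivity
  refine ⟨(1 + μ) ^ m * (C1 * I0) + 1, by positivity, ?_⟩
  intro L hL A hA x
  have h1 : ‖JJ L A x‖ ≤ ((1 + μ) * (1 + ‖x‖)) ^ m * Real.exp (-(b * ‖x‖ ^ 2)) * I0 := by
    rw [JJ_shift L x (μ • x) hl hA]
    rw [hI0, ← integral_const_mul]
    refine norm_integral_le_of_norm_le ?_ (Filter.Eventually.of_forall fun ξ => ?_)
    · exact (poly_gauss_integrable _ hl zero_le_one).const_mul _
    · refine (FF_norm L A x (μ • x) ξ Complex.I).trans ?_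
      simp only [Complex.norm_I, one_mul, Complex.I_im, Complex.I_re, zero_smul, add_zero, hL,
        mul_one, one_pow]
      have e1 : (‖ξ‖ + ‖μ • x‖) ^ m ≤ ((1 + μ) * (1 + ‖x‖)) ^ m * (‖ξ‖ + 1) ^ m := by
        rw [← mul_pow]
        gcongr
        rw [norm_smul, Real.norm_of_nonneg hμ0.le]
        have := norm_nonneg ξ
        have := norm_nonneg x
        nlinarith [mul_nonneg (norm_nonneg ξ) (norm_nonneg x), mul_nonneg hμ0.le (norm_nonneg ξ),
          mul_nonneg hμ0.le (norm_nonneg x),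
          mul_nonneg (mul_nonneg hμ0.le (norm_nonneg x)) (norm_nonneg ξ)]
      have e2 : Real.exp (-(2 * Real.pi * inner ℝ x (μ • x)) + qf A (μ • x) - qf A ξ) ≤
          Real.exp (-(b * ‖x‖ ^ 2)) * Real.exp (-l * ‖ξ‖ ^ 2) := by
        rw [← Real.exp_add]
        apply Real.exp_le_exp.2
        have a1 := (hA ξ).1
        have a2 := (hA (μ • x)).2
        rw [norm_smul, Real.norm_of_nonneg hμ0.le] at a2
        rw [inner_smul_right, real_inner_self_eq_norm_sq]
        have : -(2 * Real.pi * (μ * ‖x‖ ^ 2)) + u * (μ * ‖x‖) ^ 2 = -(b * ‖x‖ ^ 2) := by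
          rw [hμ, hb]; field_simp; ring
        linarith
      calc _ ≤ (((1 + μ) * (1 + ‖x‖)) ^ m * (‖ξ‖ + 1) ^ m) *
            (Real.exp (-(b * ‖x‖ ^ 2)) * Real.exp (-l * ‖ξ‖ ^ 2)) := by gcongr
        _ = _ := by ring
  have h2 := pow_le_exp_sq (m + M) hb0 zero_le_one (norm_nonneg x)
  rw [← hC1] at h2
  calc ‖JJ L A x‖ * (1 + ‖x‖) ^ M
      ≤ (((1 + μ) * (1 + ‖x‖)) ^ m * Real.exp (-(b * ‖x‖ ^ 2)) * I0) * (1 + ‖x‖) ^ M := by gcongr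
    _ = (1 + μ) ^ m * ((‖x‖ + 1) ^ (m + M) * Real.exp (-(b * ‖x‖ ^ 2)) * I0) := by
        rw [mul_pow, pow_add]; ring
    _ ≤ (1 + μ) ^ m * ((C1 * Real.exp (b * ‖x‖ ^ 2)) * Real.exp (-(b * ‖x‖ ^ 2)) * I0) := by gcongr
    _ = (1 + μ) ^ m * (C1 * I0) := by
        rw [mul_assoc C1, ← Real.exp_add]; simp
    _ ≤ _ := by linarith

lemma mon_smul {d : ℕ} (L : List (Fin d)) (c : ℝ) (ξ : Spc d) :
    mon L (c • ξ) = c ^ L.length * mon L ξ := by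
  unfold mon
  induction L with
  | nil => simp
  | cons b L ih => simp only [List.map_cons, List.prod_cons, ih, List.length_cons]; simp; ring

lemma qf_smul {d : ℕ} (A : Fin d → Fin d → ℝ) (c : ℝ) (ξ : Spc d) :
    qf A (c • ξ) = c ^ 2 * qf A ξ := by
  unfold qf
  simp only [Finset.mul_sum]
  refine Finset.sum_congr rfl fun i _ => Finset.sum_congr rfl fun j _ => ?_
  simp; ring

lemma qf_smul_left {d : ℕ} (A : Fin d → Fin d → ℝ) (c : ℝ) (ξ : Spc d) :
    qf (fun i j => c * A i j) ξ = c * qf A ξ := by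
  unfold qf
  simp only [Finset.mul_sum]
  refine Finset.sum_congr rfl fun i _ => Finset.sum_congr rfl fun j _ => ?_
  ring

lemma qf_add_left {d : ℕ} (A B : Fin d → Fin d → ℝ) (c : ℝ) (ξ : Spc d) :
    qf (fun i j => A i j + c * B i j) ξ = qf A ξ + c * qf B ξ := by
  unfold qf
  simp only [Finset.mul_sum, ← Finset.sum_add_distrib]
  refine Finset.sum_congr rfl fun i _ => Finset.sum_congr rfl fun j _ => ?_
  ring

lemma JJ_scale {d : ℕ} (L : List (Fin d)) (A : Fin d → Fin d → ℝ) (x : Spc d) {σ : ℝ}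
    (hσ : 0 < σ) :
    JJ L (fun i j => (σ⁻¹) ^ 2 * A i j) (σ⁻¹ • x) = ((σ ^ (d + L.length) : ℝ) : ℂ) * JJ L A x := by
  have h := Measure.integral_comp_smul (volume : Measure (Spc d))
    (fun ξ => ((mon L ξ * Real.exp (-qf A ξ) : ℝ) : ℂ) * ph (inner ℝ x ξ)) σ⁻¹
  rw [finrank_euclideanSpace_fin] at h
  have hJ : JJ L A x = ∫ ξ : Spc d, ((mon L ξ * Real.exp (-qf A ξ) : ℝ) : ℂ) * ph (inner ℝ x ξ) := rfl
  rw [← hJ] at h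
  have e : |((σ⁻¹ ^ d)⁻¹ : ℝ)| = σ ^ d := by
    rw [abs_of_nonneg (by positivity)]; simp
  rw [e] at h
  have h2 : JJ L (fun i j => (σ⁻¹) ^ 2 * A i j) (σ⁻¹ • x) = ((σ ^ L.length : ℝ) : ℂ) *
      ∫ ξ : Spc d, ((mon L (σ⁻¹ • ξ) * Real.exp (-qf A (σ⁻¹ • ξ)) : ℝ) : ℂ) *
        ph (inner ℝ x (σ⁻¹ • ξ)) := by
    unfold JJ
    rw [← integral_const_mul]
    congr 1; ext ξ
    rw [mon_smul, qf_smul, qf_smul_left, inner_smul_left, inner_smul_right, ← mul_assoc,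
      ← Complex.ofReal_mul, ← mul_assoc, ← mul_assoc, ← mul_pow, mul_inv_cancel₀ hσ.ne']
    simp
  rw [h2, h, pow_add]
  simp only [Complex.real_smul]
  push_cast; ring

lemma JJ_decay {d : ℕ} {l u : ℝ} (hl : 0 < l) (hu : 0 < u) (m n : ℕ) :
    ∃ N : ℝ, 0 < N ∧ ∀ (L : List (Fin d)), L.length = m → ∀ (A : Fin d → Fin d → ℝ) (σ : ℝ),
      0 < σ → Ell (l * σ ^ 2) (u * σ ^ 2) A → ∀ x,
        ‖JJ L A x‖ * (σ + ‖x‖) ^ (d + m + n) ≤ N * σ ^ n := by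
  obtain ⟨N, hN, h⟩ := JJ_decay1 (d := d) hl hu m (d + m + n)
  refine ⟨N, hN, fun L hL A σ hσ hA x => ?_⟩
  have hA' : Ell l u (fun i j => (σ⁻¹) ^ 2 * A i j) := by
    intro ξ
    rw [qf_smul_left]
    obtain ⟨h1, h2⟩ := hA ξ
    constructor
    · calc l * ‖ξ‖ ^ 2 = σ⁻¹ ^ 2 * (l * σ ^ 2 * ‖ξ‖ ^ 2) := by field_simp
        _ ≤ _ := by gcongr
    · calc _ ≤ σ⁻¹ ^ 2 * (u * σ ^ 2 * ‖ξ‖ ^ 2) := by gcongr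
        _ = u * ‖ξ‖ ^ 2 := by field_simp
  have h3 := h L hL _ hA' (σ⁻¹ • x)
  rw [JJ_scale L A x hσ, norm_mul, Complex.norm_real, Real.norm_of_nonneg (by positivity),
    norm_smul, Real.norm_of_nonneg (by positivity), hL] at h3
  have e : σ + ‖x‖ = σ * (1 + σ⁻¹ * ‖x‖) := by field_simp
  calc ‖JJ L A x‖ * (σ + ‖x‖) ^ (d + m + n)
      = (σ ^ (d + m) * ‖JJ L A x‖ * (1 + σ⁻¹ * ‖x‖) ^ (d + m + n)) * σ ^ n := by
        rw [e, mul_pow, pow_add σ (d + m) n]; ring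
    _ ≤ N * σ ^ n := by gcongr

lemma JJ_int {d : ℕ} (L : List (Fin d)) {A : Fin d → Fin d → ℝ} {l : ℝ} (hl : 0 < l)
    (hA : ∀ ξ : Spc d, l * ‖ξ‖ ^ 2 ≤ qf A ξ) (x : Spc d) :
    Integrable (fun ξ : Spc d => ((mon L ξ * Real.exp (-qf A ξ) : ℝ) : ℂ) * ph (inner ℝ x ξ)) := by
  refine (poly_gauss_integrable (d := d) L.length hl le_rfl).mono' ?_ ?_
  · have := qf_cont A
    have := mon_cont L
    have := ph_cont
    exact Continuous.aestronglyMeasurable (by fun_prop)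
  · refine Filter.Eventually.of_forall fun ξ => ?_
    rw [norm_mul, ph_norm, Complex.norm_real, Real.norm_eq_abs, abs_mul, Real.abs_exp, add_zero,
      mul_one]
    gcongr
    · exact mon_le L ξ
    · have := hA ξ; linarith

lemma qf_abs_le {d : ℕ} (B : Fin d → Fin d → ℝ) (ξ : Spc d) :
    |qf B ξ| ≤ (∑ i, ∑ j, |B i j|) * ‖ξ‖ ^ 2 := by
  unfold qf
  rw [Finset.sum_mul]
  refine (Finset.abs_sum_le_sum_abs _ _).trans (Finset.sum_le_sum fun i _ => ?_)
  rw [Finset.sum_mul]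
  refine (Finset.abs_sum_le_sum_abs _ _).trans (Finset.sum_le_sum fun j _ => ?_)
  rw [abs_mul, abs_mul, mul_assoc, pow_two]
  gcongr
  · exact coord_le ξ i
  · exact coord_le ξ j

lemma JJ_path {d : ℕ} (L : List (Fin d)) (A B : Fin d → Fin d → ℝ) (x y : Spc d) (θ : ℝ) {l : ℝ}
    (hl : 0 < l) (hA : ∀ ξ : Spc d, l * ‖ξ‖ ^ 2 ≤ qf (fun i j => A i j + θ * B i j) ξ) :
    HasDerivAt (fun θ : ℝ => JJ L (fun i j => A i j + θ * B i j) (x + θ • y))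
      ((∑ i, (2 * Real.pi * Complex.I * (y i : ℂ)) *
          JJ (i :: L) (fun i j => A i j + θ * B i j) (x + θ • y)) -
        ∑ i, ∑ j, (B i j : ℂ) * JJ (i :: j :: L) (fun i j => A i j + θ * B i j) (x + θ • y)) θ := by
  set b : ℝ := ∑ i, ∑ j, |B i j| with hb
  have hb0 : 0 ≤ b := Finset.sum_nonneg fun i _ => Finset.sum_nonneg fun j _ => abs_nonneg _
  set r : ℝ := l / (2 * (b + 1)) with hr
  have hr0 : 0 < r := by positivity
  have hrb : r * b ≤ l / 2 := by
    rw [hr, div_mul_eq_mul_div, div_le_div_iff₀ (by positivity) (by positivity)]; nlinarith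
  have hA2 : ∀ θ' ∈ ball θ r, ∀ ξ : Spc d, (l / 2) * ‖ξ‖ ^ 2 ≤ qf (fun i j => A i j + θ' * B i j) ξ := by
    intro θ' hθ' ξ
    have h1 := hA ξ
    rw [qf_add_left] at h1 ⊢
    rw [mem_ball, Real.dist_eq] at hθ'
    have h2 := qf_abs_le B ξ
    rw [← hb] at h2
    have h3 : |(θ' - θ) * qf B ξ| ≤ r * (b * ‖ξ‖ ^ 2) := by
      rw [abs_mul]; gcongr
    have h4 := (abs_le.1 h3).1
    have h5 : r * b * ‖ξ‖ ^ 2 ≤ l / 2 * ‖ξ‖ ^ 2 := by gcongr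
    nlinarith
  have := qf_cont A
  have := qf_cont B
  have := mon_cont L
  have := ph_cont
  have hder : ∀ (ξ : Spc d) (θ' : ℝ), HasDerivAt (fun θ : ℝ =>
      ((mon L ξ * Real.exp (-qf (fun i j => A i j + θ * B i j) ξ) : ℝ) : ℂ) *
        ph (inner ℝ (x + θ • y) ξ))
      (((mon L ξ * Real.exp (-qf (fun i j => A i j + θ' * B i j) ξ) : ℝ) : ℂ) *
        ph (inner ℝ (x + θ' • y) ξ) *
        (2 * Real.pi * Complex.I * (inner ℝ y ξ : ℝ) - (qf B ξ : ℝ))) θ' := by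
    intro ξ θ'
    have e : ∀ θ : ℝ, ((mon L ξ * Real.exp (-qf (fun i j => A i j + θ * B i j) ξ) : ℝ) : ℂ) *
        ph (inner ℝ (x + θ • y) ξ) = (mon L ξ : ℂ) * Complex.exp ((-qf A ξ : ℝ) +
          2 * Real.pi * Complex.I * (inner ℝ x ξ : ℝ) + (θ : ℂ) * (2 * Real.pi * Complex.I * (inner ℝ y ξ : ℝ) - (qf B ξ : ℝ))) := by
      intro θ
      unfold ph
      rw [Complex.ofReal_mul, Complex.ofReal_exp, mul_assoc (mon L ξ : ℂ), ← Complex.exp_add, qf_add_left,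
        inner_add_left, inner_smul_left]
      congr 2
      simp; ring
    simp only [e]
    have h1 : HasDerivAt (fun θ : ℝ => (θ : ℂ)) 1 θ' := Complex.ofRealCLM.hasDerivAt
    have h2 := ((h1.mul_const (2 * Real.pi * Complex.I * (inner ℝ y ξ : ℝ) - (qf B ξ : ℝ) : ℂ)).const_add
      ((-qf A ξ : ℝ) + 2 * Real.pi * Complex.I * (inner ℝ x ξ : ℝ) : ℂ)).cexp.const_mul (mon L ξ : ℂ)
    refine h2.congr_deriv ?_
    ring
  set K : ℝ := 2 * Real.pi * ‖y‖ + b with hK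
  have hK0 : 0 ≤ K := by positivity
  have hbi : Integrable (fun ξ : Spc d => K * ((‖ξ‖ + 1) ^ (L.length + 2) *
      Real.exp (-(l / 2) * ‖ξ‖ ^ 2))) :=
    (poly_gauss_integrable _ (by positivity) zero_le_one).const_mul _
  have main := hasDerivAt_integral_of_dominated_loc_of_deriv_le (μ := volume) (s := ball θ r)
    (F := fun (θ : ℝ) (ξ : Spc d) => ((mon L ξ * Real.exp (-qf (fun i j => A i j + θ * B i j) ξ) : ℝ) : ℂ) *
        ph (inner ℝ (x + θ • y) ξ))
    (F' := fun (θ' : ℝ) (ξ : Spc d) => ((mon L ξ * Real.exp (-qf (fun i j => A i j + θ' * B i j) ξ) : ℝ) : ℂ) *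
        ph (inner ℝ (x + θ' • y) ξ) *
        (2 * Real.pi * Complex.I * (inner ℝ y ξ : ℝ) - (qf B ξ : ℝ))) (x₀ := θ)
    (bound := fun ξ : Spc d => K * ((‖ξ‖ + 1) ^ (L.length + 2) *
      Real.exp (-(l / 2) * ‖ξ‖ ^ 2))) (ball_mem_nhds _ hr0)
    (Filter.Eventually.of_forall fun θ' => by
      have := qf_cont (fun i j => A i j + θ' * B i j)
      exact Continuous.aestronglyMeasurable (by fun_prop))
    (JJ_int L hl hA _)
    (by
      have := qf_cont (fun i j => A i j + θ * B i j)
      exact Continuous.aestronglyMeasurable (by fun_prop))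
    (Filter.Eventually.of_forall fun ξ θ' hθ' => by
      rw [norm_mul, norm_mul, ph_norm, Complex.norm_real, Real.norm_eq_abs, abs_mul, Real.abs_exp,
        mul_one]
      have a1 : ‖(2 * Real.pi * Complex.I * (inner ℝ y ξ : ℝ) - (qf B ξ : ℝ) : ℂ)‖ ≤
          K * (‖ξ‖ + 1) ^ 2 := by
        refine (norm_sub_le _ _).trans ?_
        have c1 : ‖(2 * Real.pi * Complex.I * (inner ℝ y ξ : ℝ) : ℂ)‖ ≤ 2 * Real.pi * (‖y‖ * ‖ξ‖) := by
          simp only [norm_mul, Complex.norm_real, Complex.norm_I, mul_one, Complex.norm_ofNat]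
          rw [Real.norm_of_nonneg Real.pi_pos.le]
          gcongr
          exact norm_inner_le_norm y ξ
        have c2 : ‖((qf B ξ : ℝ) : ℂ)‖ ≤ b * ‖ξ‖ ^ 2 := by
          rw [Complex.norm_real]; exact qf_abs_le B ξ
        have c3 : ‖ξ‖ ≤ (‖ξ‖ + 1) ^ 2 := by nlinarith [norm_nonneg ξ]
        have c4 : ‖ξ‖ ^ 2 ≤ (‖ξ‖ + 1) ^ 2 := by nlinarith [norm_nonneg ξ]
        calc _ ≤ 2 * Real.pi * (‖y‖ * (‖ξ‖ + 1) ^ 2) + b * (‖ξ‖ + 1) ^ 2 := by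
              refine add_le_add (c1.trans ?_) (c2.trans ?_) <;> gcongr
          _ = _ := by rw [hK]; ring
      have a2 : |mon L ξ| ≤ (‖ξ‖ + 1) ^ L.length := (mon_le L ξ).trans (by gcongr; linarith)
      have a3 : Real.exp (-qf (fun i j => A i j + θ' * B i j) ξ) ≤ Real.exp (-(l / 2) * ‖ξ‖ ^ 2) := by
        apply Real.exp_le_exp.2
        have := hA2 θ' hθ' ξ
        linarith
      calc _ ≤ (‖ξ‖ + 1) ^ L.length * Real.exp (-(l / 2) * ‖ξ‖ ^ 2) * (K * (‖ξ‖ + 1) ^ 2) := by gcongr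
        _ = _ := by rw [pow_add]; ring)
    hbi
    (Filter.Eventually.of_forall fun ξ θ' _ => hder ξ θ')
  have h2 := main.2
  refine h2.congr_deriv (Eq.symm ?_)
  unfold JJ
  have i1 : ∀ L' : List (Fin d), Integrable (fun ξ : Spc d => ((mon L' ξ *
      Real.exp (-qf (fun i j => A i j + θ * B i j) ξ) : ℝ) : ℂ) * ph (inner ℝ (x + θ • y) ξ)) :=
    fun L' => JJ_int L' hl hA _
  simp only [← integral_const_mul]
  rw [← integral_finset_sum _ (fun i _ => (i1 _).const_mul _)]
  simp_rw [← integral_finset_sum Finset.univ (fun j _ => (i1 _).const_mul _)]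
  rw [← integral_finset_sum _ (fun i _ => integrable_finset_sum _ fun j _ => (i1 _).const_mul _)]
  rw [← integral_sub (integrable_finset_sum _ fun j _ => (i1 _).const_mul _)
    (integrable_finset_sum _ fun i _ => integrable_finset_sum _ fun j _ => (i1 _).const_mul _)]
  congr 1; ext ξ
  rw [mul_sub]
  congr 1
  · have : (inner ℝ y ξ : ℝ) = ∑ i, y i * ξ i := by
      simp [PiLp.inner_apply, mul_comm]
    rw [this]
    push_cast
    rw [Finset.mul_sum, Finset.mul_sum]
    refine Finset.sum_congr rfl fun i _ => ?_
    simp only [mon, List.map_cons, List.prod_cons]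
    push_cast; ring
  · have : qf B ξ = ∑ i, ∑ j, B i j * ξ i * ξ j := rfl
    rw [this]
    push_cast
    rw [Finset.mul_sum]
    refine Finset.sum_congr rfl fun i _ => ?_
    rw [Finset.mul_sum]
    refine Finset.sum_congr rfl fun j _ => ?_
    simp only [mon, List.map_cons, List.prod_cons]
    push_cast; ring

lemma inS_entry {d : ℕ} {δ : ℝ} (hδ : 0 < δ) {a : Matrix (Fin d) (Fin d) ℝ} (h : inS d δ a)
    (i j : Fin d) : |a i j| ≤ δ⁻¹ := by
  obtain ⟨hs, hq⟩ := h
  set Q : (Fin d → ℝ) → ℝ := fun ξ => ∑ i, ∑ j, a i j * ξ i * ξ j with hQ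
  set S : (Fin d → ℝ) → ℝ := fun ξ => ∑ i, ξ i ^ 2 with hS
  set p : Fin d → ℝ := Pi.single i 1 with hp
  set q : Fin d → ℝ := Pi.single j 1 with hq'
  have e1 : Q (p + q) - Q (p - q) = 2 * (∑ i, ∑ j, a i j * p i * q j) + 2 * (∑ i, ∑ j, a i j * q i * p j) := by
    simp only [hQ, Finset.mul_sum, ← Finset.sum_sub_distrib, ← Finset.sum_add_distrib]
    refine Finset.sum_congr rfl fun i _ => Finset.sum_congr rfl fun j _ => ?_
    simp; ring
  have e2 : ∑ i, ∑ j, a i j * p i * q j = a i j := by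
    simp [hp, hq', Pi.single_apply]
  have e3 : ∑ i, ∑ j, a i j * q i * p j = a i j := by
    rw [← hs.apply i j]
    simp [hp, hq', Pi.single_apply]
  have e4 : S (p + q) + S (p - q) = 2 * (∑ i, p i ^ 2) + 2 * (∑ i, q i ^ 2) := by
    simp only [hS, Finset.mul_sum, ← Finset.sum_add_distrib]
    refine Finset.sum_congr rfl fun i _ => ?_
    simp; ring
  have e5 : ∑ i, p i ^ 2 = 1 := by simp [hp, Pi.single_apply]
  have e6 : ∑ i, q i ^ 2 = 1 := by simp [hq', Pi.single_apply]
  have n1 : 0 ≤ S (p + q) := Finset.sum_nonneg fun i _ => sq_nonneg _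
  have n2 : 0 ≤ S (p - q) := Finset.sum_nonneg fun i _ => sq_nonneg _
  obtain ⟨h1, h2⟩ := hq (p + q)
  obtain ⟨h3, h4⟩ := hq (p - q)
  change δ * S (p + q) ≤ Q (p + q) at h1
  change Q (p + q) ≤ δ⁻¹ * S (p + q) at h2
  change δ * S (p - q) ≤ Q (p - q) at h3
  change Q (p - q) ≤ δ⁻¹ * S (p - q) at h4
  rw [e2, e3] at e1
  rw [e5, e6] at e4
  have := mul_nonneg hδ.le n1
  have := mul_nonneg hδ.le n2
  have hi : 0 < δ⁻¹ := inv_pos.2 hδ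
  have m1 : δ⁻¹ * S (p + q) ≤ δ⁻¹ * 4 := by gcongr; linarith
  have m2 : δ⁻¹ * S (p - q) ≤ δ⁻¹ * 4 := by gcongr; linarith
  rw [abs_le]; constructor <;> linarith

lemma inS_qf {d : ℕ} {δ : ℝ} {a : Matrix (Fin d) (Fin d) ℝ} (h : inS d δ a) : Ell δ δ⁻¹ a := by
  intro ξ
  have := h.2 (fun i => ξ i)
  rw [EuclideanSpace.real_norm_sq_eq]
  exact this

/-- standing assumptions on the coefficients -/
structure Adm {d : ℕ} (δ : ℝ) (a : ℝ → Matrix (Fin d) (Fin d) ℝ) : Prop where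
  m : Measurable a
  s : ∀ t, inS d δ (a t)
  p : 0 < δ
  l : δ ≤ 1

def Am {d : ℕ} (a : ℝ → Matrix (Fin d) (Fin d) ℝ) (ε t s : ℝ) (i j : Fin d) : ℝ :=
  4 * Real.pi ^ 2 * ((∫ r in t..s, a r i j) + if i = j then ε else 0)

lemma Adm.mij {d : ℕ} {δ : ℝ} {a : ℝ → Matrix (Fin d) (Fin d) ℝ} (h : Adm δ a) (i j : Fin d) :
    Measurable fun r => a r i j :=
  (measurable_pi_apply j).comp ((measurable_pi_apply i).comp h.m)

lemma Adm.ii {d : ℕ} {δ : ℝ} {a : ℝ → Matrix (Fin d) (Fin d) ℝ} (h : Adm δ a) (i j : Fin d)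
    (t s : ℝ) : IntervalIntegrable (fun r => a r i j) volume t s := by
  refine (intervalIntegrable_const (c := δ⁻¹)).mono_fun (h.mij i j).aestronglyMeasurable ?_
  refine Filter.Eventually.of_forall fun r => ?_
  have := inS_entry h.p (h.s r) i j
  have h2 : 0 < δ⁻¹ := inv_pos.2 h.p
  simpa [abs_of_pos h.p] using this

lemma qf_one {d : ℕ} (ε : ℝ) (ξ : Spc d) : qf (fun i j => if i = j then ε else 0) ξ = ε * ‖ξ‖ ^ 2 := by
  rw [EuclideanSpace.real_norm_sq_eq, Finset.mul_sum]
  unfold qf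
  refine Finset.sum_congr rfl fun i _ => ?_
  simp; ring

lemma ii_sum {d : ℕ} {f : Fin d → ℝ → ℝ} {t s : ℝ} (h : ∀ i, IntervalIntegrable (f i) volume t s) :
    IntervalIntegrable (fun r => ∑ i, f i r) volume t s := by
  have := IntervalIntegrable.sum Finset.univ (fun i _ => h i)
  have e : (fun r => ∑ i, f i r) = ∑ i, f i := by ext r; simp
  rw [e]; exact this

lemma Adm.ii3 {d : ℕ} {δ : ℝ} {a : ℝ → Matrix (Fin d) (Fin d) ℝ} (h : Adm δ a) (ξ : Spc d)
    (t s : ℝ) (i j : Fin d) : IntervalIntegrable (fun r => a r i j * ξ i * ξ j) volume t s :=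
  ((h.ii i j t s).mul_const _).mul_const _

lemma qf_Am {d : ℕ} {δ : ℝ} {a : ℝ → Matrix (Fin d) (Fin d) ℝ} (h : Adm δ a) (ε t s : ℝ) (ξ : Spc d) :
    qf (Am a ε t s) ξ = 4 * Real.pi ^ 2 * ((∫ r in t..s, qf (a r) ξ) + ε * ‖ξ‖ ^ 2) := by
  have e : (∫ r in t..s, qf (a r) ξ) = qf (fun i j => ∫ r in t..s, a r i j) ξ := by
    unfold qf
    rw [intervalIntegral.integral_finsetSum (f := fun i r => ∑ j, a r i j * ξ i * ξ j)
      (fun i _ => ii_sum fun j => h.ii3 ξ t s i j)]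
    refine Finset.sum_congr rfl fun i _ => ?_
    rw [intervalIntegral.integral_finsetSum (f := fun j r => a r i j * ξ i * ξ j)
      (fun j _ => h.ii3 ξ t s i j)]
    refine Finset.sum_congr rfl fun j _ => ?_
    rw [intervalIntegral.integral_mul_const, intervalIntegral.integral_mul_const]
  have e2 : Am a ε t s = fun i j => 4 * Real.pi ^ 2 * ((∫ r in t..s, a r i j) + 1 * if i = j then ε else 0) := by
    ext i j; simp [Am]
  rw [e2, qf_smul_left _ (4 * Real.pi ^ 2), qf_add_left _ _ 1, qf_one, e, one_mul]

lemma Adm.qi {d : ℕ} {δ : ℝ} {a : ℝ → Matrix (Fin d) (Fin d) ℝ} (h : Adm δ a) (ξ : Spc d) (t s : ℝ) :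
    IntervalIntegrable (fun r => qf (a r) ξ) volume t s := by
  unfold qf
  exact ii_sum fun i => ii_sum fun j => h.ii3 ξ t s i j

lemma Am_Ell {d : ℕ} {δ : ℝ} {a : ℝ → Matrix (Fin d) (Fin d) ℝ} (h : Adm δ a) {ε t s : ℝ}
    (hε : 0 ≤ ε) (hts : t ≤ s) :
    Ell (4 * Real.pi ^ 2 * δ * (s - t + ε)) (4 * Real.pi ^ 2 * δ⁻¹ * (s - t + ε)) (Am a ε t s) := by
  intro ξ
  rw [qf_Am h]
  have h1 : (s - t) * (δ * ‖ξ‖ ^ 2) ≤ ∫ r in t..s, qf (a r) ξ := by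
    have := intervalIntegral.integral_mono_on hts (intervalIntegrable_const (c := δ * ‖ξ‖ ^ 2)) (h.qi ξ t s)
      (fun r _ => (inS_qf (h.s r) ξ).1)
    rwa [intervalIntegral.integral_const, smul_eq_mul] at this
  have h2 : ∫ r in t..s, qf (a r) ξ ≤ (s - t) * (δ⁻¹ * ‖ξ‖ ^ 2) := by
    have := intervalIntegral.integral_mono_on hts (h.qi ξ t s) (intervalIntegrable_const (c := δ⁻¹ * ‖ξ‖ ^ 2))
      (fun r _ => (inS_qf (h.s r) ξ).2)
    rwa [intervalIntegral.integral_const, smul_eq_mul] at this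
  have hd1 : 1 ≤ δ⁻¹ := (one_le_inv₀ h.p).2 h.l
  have h3 : δ * (ε * ‖ξ‖ ^ 2) ≤ 1 * (ε * ‖ξ‖ ^ 2) := by gcongr; exact h.l
  have h4 : 1 * (ε * ‖ξ‖ ^ 2) ≤ δ⁻¹ * (ε * ‖ξ‖ ^ 2) := by gcongr
  constructor
  · calc _ = 4 * Real.pi ^ 2 * ((s - t) * (δ * ‖ξ‖ ^ 2) + δ * (ε * ‖ξ‖ ^ 2)) := by ring
      _ ≤ _ := mul_le_mul_of_nonneg_left (by linarith) (by positivity)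
  · calc _ ≤ 4 * Real.pi ^ 2 * ((s - t) * (δ⁻¹ * ‖ξ‖ ^ 2) + δ⁻¹ * (ε * ‖ξ‖ ^ 2)) :=
        mul_le_mul_of_nonneg_left (by linarith) (by positivity)
      _ = _ := by ring

lemma Am_entry {d : ℕ} {δ : ℝ} {a : ℝ → Matrix (Fin d) (Fin d) ℝ} (h : Adm δ a) {t s : ℝ}
    (hts : t ≤ s) (i j : Fin d) : |Am a 0 t s i j| ≤ 4 * Real.pi ^ 2 * δ⁻¹ * (s - t) := by
  unfold Am
  have h1 : ‖∫ r in t..s, a r i j‖ ≤ δ⁻¹ * |s - t| :=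
    intervalIntegral.norm_integral_le_of_norm_le_const fun r _ => inS_entry h.p (h.s r) i j
  rw [abs_of_nonneg (by linarith : 0 ≤ s - t), Real.norm_eq_abs] at h1
  simp only [ite_self, add_zero]
  rw [abs_mul, abs_of_nonneg (by positivity), mul_assoc (4 * Real.pi ^ 2)]
  gcongr

lemma Am_add {d : ℕ} {δ : ℝ} {a : ℝ → Matrix (Fin d) (Fin d) ℝ} (h : Adm δ a) (ε t1 t2 s : ℝ) :
    (fun i j => Am a ε t2 s i j + 1 * Am a 0 t1 t2 i j) = Am a ε t1 s := by
  ext i j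
  unfold Am
  rw [← intervalIntegral.integral_add_adjacent_intervals (h.ii i j t1 t2) (h.ii i j t2 s)]
  simp; ring

lemma JJ_diff {d : ℕ} {l u b : ℝ} (hl : 0 < l) (hu : 0 < u) (hb : 0 ≤ b) :
    ∃ N : ℝ, 0 < N ∧ ∀ (k m : Fin d) (A B : Fin d → Fin d → ℝ) (α β : ℝ), 0 < α → 0 ≤ β →
      Ell (l * α) (u * α) A → Ell (l * β) (u * β) B → (∀ i j, |B i j| ≤ b * β) →
      ∀ (x y : Spc d) (P : ℝ), 0 < P →
        (∀ θ ∈ Icc (0 : ℝ) 1, P ≤ 4 * (Real.sqrt (α + θ * β) + ‖x + θ • y‖)) →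
        ‖JJ [k, m] (fun i j => A i j + 1 * B i j) (x + y) - JJ [k, m] A x‖ ≤
          N * (‖y‖ / P ^ (d + 3) + β / P ^ (d + 4)) := by
  obtain ⟨N3, h3, H3⟩ := JJ_decay (d := d) hl hu 3 0
  obtain ⟨N4, h4, H4⟩ := JJ_decay (d := d) hl hu 4 0
  refine ⟨d * (2 * Real.pi * (N3 * 4 ^ (d + 3))) + d * (d * (b * (N4 * 4 ^ (d + 4)))) + 1, by positivity, ?_⟩
  intro k m A B α β hα hβ hA hB hBe x y P hP hPθ
  have hEll : ∀ θ ∈ Icc (0 : ℝ) 1, Ell (l * (α + θ * β)) (u * (α + θ * β)) (fun i j => A i j + θ * B i j) := by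
    intro θ hθ ξ
    rw [qf_add_left]
    obtain ⟨a1, a2⟩ := hA ξ
    obtain ⟨b1, b2⟩ := hB ξ
    have b1' := mul_le_mul_of_nonneg_left b1 hθ.1
    have b2' := mul_le_mul_of_nonneg_left b2 hθ.1
    constructor
    · calc _ = l * α * ‖ξ‖ ^ 2 + θ * (l * β * ‖ξ‖ ^ 2) := by ring
        _ ≤ _ := add_le_add a1 b1'
    · calc _ ≤ u * α * ‖ξ‖ ^ 2 + θ * (u * β * ‖ξ‖ ^ 2) := add_le_add a2 b2'
        _ = _ := by ring
  have hpos : ∀ θ ∈ Icc (0 : ℝ) 1, 0 < α + θ * β := fun θ hθ => by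
    have := mul_nonneg hθ.1 hβ; linarith
  have hder := fun θ (hθ : θ ∈ Icc (0 : ℝ) 1) =>
    JJ_path [k, m] A B x y θ (mul_pos hl (hpos θ hθ)) (fun ξ => (hEll θ hθ ξ).1)
  have bd : ∀ (M : ℕ) (NM : ℝ), 0 < NM → (∀ (L : List (Fin d)), L.length = M → ∀ (A : Fin d → Fin d → ℝ) (σ : ℝ),
      0 < σ → Ell (l * σ ^ 2) (u * σ ^ 2) A → ∀ x,
        ‖JJ L A x‖ * (σ + ‖x‖) ^ (d + M + 0) ≤ NM * σ ^ 0) →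
      ∀ θ ∈ Icc (0 : ℝ) 1, ∀ L : List (Fin d), L.length = M →
        ‖JJ L (fun i j => A i j + θ * B i j) (x + θ • y)‖ ≤ NM * 4 ^ (d + M) / P ^ (d + M) := by
    intro M NM hNM H θ hθ L hL
    have hs := Real.sq_sqrt (hpos θ hθ).le
    have := H L hL _ (Real.sqrt (α + θ * β)) (Real.sqrt_pos.2 (hpos θ hθ)) (by rw [hs]; exact hEll θ hθ) (x + θ • y)
    rw [pow_zero, mul_one, add_zero] at this
    rw [le_div_iff₀ (by positivity)]
    calc _ ≤ ‖JJ L (fun i j => A i j + θ * B i j) (x + θ • y)‖ *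
            (4 * (Real.sqrt (α + θ * β) + ‖x + θ • y‖)) ^ (d + M) := by
            gcongr; exact hPθ θ hθ
      _ = (‖JJ L (fun i j => A i j + θ * B i j) (x + θ • y)‖ *
            (Real.sqrt (α + θ * β) + ‖x + θ • y‖) ^ (d + M)) * 4 ^ (d + M) := by rw [mul_pow]; ring
      _ ≤ _ := by gcongr
  have key := norm_image_sub_le_of_norm_deriv_le_segment_01'
    (f := fun θ : ℝ => JJ [k, m] (fun i j => A i j + θ * B i j) (x + θ • y))
    (fun θ hθ => (hder θ hθ).hasDerivWithinAt)
    (C := (d * (2 * Real.pi * (N3 * 4 ^ (d + 3))) + d * (d * (b * (N4 * 4 ^ (d + 4)))) + 1) *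
      (‖y‖ / P ^ (d + 3) + β / P ^ (d + 4))) (by
      intro θ hθ
      have hθ' : θ ∈ Icc (0 : ℝ) 1 := ⟨hθ.1, hθ.2.le⟩
      have t1 : ‖∑ i, (2 * Real.pi * Complex.I * (y i : ℂ)) *
          JJ (i :: [k, m]) (fun i j => A i j + θ * B i j) (x + θ • y)‖ ≤
          d * (2 * Real.pi * (N3 * 4 ^ (d + 3))) * (‖y‖ / P ^ (d + 3)) := by
        refine (norm_sum_le _ _).trans ?_
        calc _ ≤ ∑ i : Fin d, (2 * Real.pi * ‖y‖) * (N3 * 4 ^ (d + 3) / P ^ (d + 3)) := by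
              refine Finset.sum_le_sum fun i _ => ?_
              rw [norm_mul]
              gcongr
              · simp only [norm_mul, Complex.norm_real, Complex.norm_I, mul_one, Complex.norm_ofNat]
                rw [Real.norm_of_nonneg Real.pi_pos.le]
                gcongr
                exact coord_le y i
              · exact bd 3 N3 h3 H3 θ hθ' _ rfl
          _ = _ := by simp; ring
      have t2 : ‖∑ i, ∑ j, (B i j : ℂ) * JJ (i :: j :: [k, m]) (fun i j => A i j + θ * B i j) (x + θ • y)‖ ≤
          d * (d * (b * (N4 * 4 ^ (d + 4)))) * (β / P ^ (d + 4)) := by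
        refine (norm_sum_le _ _).trans ?_
        calc _ ≤ ∑ i : Fin d, ∑ j : Fin d, (b * β) * (N4 * 4 ^ (d + 4) / P ^ (d + 4)) := by
              refine Finset.sum_le_sum fun i _ => (norm_sum_le _ _).trans (Finset.sum_le_sum fun j _ => ?_)
              rw [norm_mul]
              gcongr
              · rw [Complex.norm_real]; exact hBe i j
              · exact bd 4 N4 h4 H4 θ hθ' _ rfl
          _ = _ := by simp; ring
      refine (norm_sub_le _ _).trans ((add_le_add t1 t2).trans ?_)
      have p1 : 0 ≤ ‖y‖ / P ^ (d + 3) := by positivity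
      have p2 : 0 ≤ β / P ^ (d + 4) := by positivity
      have c1 : 0 ≤ d * (2 * Real.pi * (N3 * 4 ^ (d + 3))) := by positivity
      have c2 : 0 ≤ d * (d * (b * (N4 * 4 ^ (d + 4)))) := by positivity
      nlinarith [mul_nonneg c1 p2, mul_nonneg c2 p1])
  have e0 : (fun i j => A i j + 0 * B i j) = A := by ext i j; simp
  simp only [one_smul, zero_smul, add_zero] at key
  rw [e0] at key
  exact key

def ker {d : ℕ} (a : ℝ → Matrix (Fin d) (Fin d) ℝ) (ε : ℝ) (k m : Fin d) (z w : Pt d) : ℂ :=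
  if z.1 < w.1 then JJ [k, m] (Am a ε z.1 w.1) (z.2 - w.2) else 0

lemma far_cases {d : ℕ} {κ ρ : ℝ} {w : Pt d} (hw : 0 < w.1) (hn : w ∉ cyl d (κ * ρ) 0 0) :
    (κ * ρ) ^ 2 ≤ w.1 ∨ κ * ρ ≤ ‖w.2‖ := by
  by_contra hc
  push Not at hc
  exact hn ⟨⟨hw, by linarith [hc.1]⟩, by simpa using hc.2⟩

lemma far_prho {d : ℕ} {κ ρ : ℝ} {w : Pt d} (hw : 0 < w.1)
    (hn : w ∉ cyl d (κ * ρ) 0 0) : κ * ρ ≤ prho w := by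
  unfold prho
  rw [abs_of_pos hw]
  rcases far_cases hw hn with h | h
  · have := Real.le_sqrt_of_sq_le h
    have := norm_nonneg w.2
    linarith
  · have := Real.sqrt_nonneg w.1
    linarith

lemma ker_diff1 (d : ℕ) {δ : ℝ} (hδ : 0 < δ) :
    ∃ N : ℝ, 0 < N ∧ ∀ a : ℝ → Matrix (Fin d) (Fin d) ℝ, Adm δ a → ∀ (k m : Fin d) (ρ κ ε : ℝ),
      0 < ρ → 2 ≤ κ → 0 < ε → ε ≤ ρ ^ 2 → ∀ z1 ∈ cyl d ρ 0 0, ∀ z2 ∈ cyl d ρ 0 0, z1.1 ≤ z2.1 →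
      ∀ w : Pt d, 0 < w.1 → w ∉ cyl d (κ * ρ) 0 0 →
        ‖ker a ε k m z1 w - ker a ε k m z2 w‖ ≤ N * ρ / prho w ^ (d + 3) := by
  have hl : 0 < 4 * Real.pi ^ 2 * δ := by positivity
  have hu : 0 < 4 * Real.pi ^ 2 * δ⁻¹ := by positivity
  obtain ⟨N1, h1, H1⟩ := JJ_decay (d := d) hl hu 2 1
  obtain ⟨N2, h2, H2⟩ := JJ_diff (d := d) hl hu hu.le
  refine ⟨N1 * 4 ^ (d + 3) * 2 + N2 * 3, by positivity, ?_⟩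
  rintro a ha k m ρ κ ε hρ hκ hε hερ ⟨t1, x1⟩ ⟨ht1, hx1⟩ ⟨t2, x2⟩ ⟨ht2, hx2⟩ h12 ⟨s, y⟩ hs hn
  simp only [zero_add, mem_Ioo, mem_ball, dist_zero_right] at ht1 hx1 ht2 hx2 h12 hs
  have h2κ : 2 * ρ ≤ κ * ρ := by gcongr
  have hP := far_prho hs hn
  set P := prho (s, y) with hPd
  have hP0 : 0 < P := by linarith
  have hPe : P = ‖y‖ + Real.sqrt s := by rw [hPd]; simp [prho, abs_of_pos hs]
  have hcase := far_cases hs hn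
  simp only at hcase
  have c1 : 0 ≤ N1 * 4 ^ (d + 3) * 2 * ρ / P ^ (d + 3) := by positivity
  have c2 : 0 ≤ N2 * 3 * ρ / P ^ (d + 3) := by positivity
  have eN : (N1 * 4 ^ (d + 3) * 2 + N2 * 3) * ρ / P ^ (d + 3) =
    N1 * 4 ^ (d + 3) * 2 * ρ / P ^ (d + 3) + N2 * 3 * ρ / P ^ (d + 3) := by ring
  rw [eN]
  by_cases hs1 : t1 < s
  swap
  · have : ¬ t2 < s := by linarith
    simp only [ker, hs1, this, if_false, sub_self, norm_zero]
    positivity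
  by_cases hs2 : t2 < s
  swap
  · simp only [ker, hs1, hs2, if_false, if_true, sub_zero]
    refine le_trans ?_ (le_add_of_nonneg_right c2)
    have hsρ : s < ρ ^ 2 := by linarith
    have hy : κ * ρ ≤ ‖y‖ := by
      rcases hcase with h | h
      · nlinarith
      · exact h
    have hX : ‖y‖ ≤ ‖x1 - y‖ + ‖x1‖ := by
      have := norm_sub_le x1 (x1 - y); simpa [add_comm] using this
    have hss : Real.sqrt s ≤ ρ := by
      rw [Real.sqrt_le_left hρ.le]; exact hsρ.le
    set σ := Real.sqrt (s - t1 + ε) with hσ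
    have hσp : 0 < s - t1 + ε := by linarith
    have hσ0 : 0 < σ := Real.sqrt_pos.2 hσp
    have hσ2 : σ ≤ 2 * ρ := by
      rw [hσ, Real.sqrt_le_left (by positivity)]; nlinarith
    have := H1 [k, m] rfl (Am a ε t1 s) σ hσ0 (by
      rw [hσ, Real.sq_sqrt hσp.le]; exact Am_Ell ha hε.le hs1.le) (x1 - y)
    rw [pow_one] at this
    rw [le_div_iff₀ (by positivity)]
    calc _ ≤ ‖JJ [k, m] (Am a ε t1 s) (x1 - y)‖ * (4 * (σ + ‖x1 - y‖)) ^ (d + 3) := by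
          gcongr; linarith
      _ = (‖JJ [k, m] (Am a ε t1 s) (x1 - y)‖ * (σ + ‖x1 - y‖) ^ (d + 2 + 1)) * 4 ^ (d + 3) := by
          rw [mul_pow]; ring
      _ ≤ (N1 * (2 * ρ)) * 4 ^ (d + 3) :=
          mul_le_mul_of_nonneg_right (this.trans (by gcongr)) (by positivity)
      _ = _ := by ring
  · simp only [ker, hs1, hs2, if_true]
    refine le_trans ?_ (le_add_of_nonneg_left c1)
    have hα : 0 < s - t2 + ε := by linarith
    have hβ : 0 ≤ t2 - t1 := by linarith
    have hB := Am_Ell ha (le_refl (0:ℝ)) h12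
    rw [add_zero] at hB
    have := H2 k m (Am a ε t2 s) (Am a 0 t1 t2) (s - t2 + ε) (t2 - t1) hα hβ
      (Am_Ell ha hε.le hs2.le) hB (Am_entry ha h12) (x2 - y) (x1 - x2) P hP0 (by
        intro θ hθ
        set X := x2 - y + θ • (x1 - x2) with hX
        have e1 : X = (1 - θ) • x2 + θ • x1 - y := by rw [hX, sub_smul, one_smul, smul_sub]; abel
        have e2 : ‖(1 - θ) • x2 + θ • x1‖ ≤ ρ := by
          have hc := convex_ball (0 : Spc d) ρ (show x2 ∈ ball 0 ρ by simpa using hx2)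
            (show x1 ∈ ball 0 ρ by simpa using hx1) (by linarith [hθ.2] : 0 ≤ 1 - θ) hθ.1 (by ring)
          exact (by simpa using hc : ‖(1 - θ) • x2 + θ • x1‖ < ρ).le
        have e3 : ‖y‖ ≤ ‖X‖ + ρ := by
          have := norm_sub_le ((1 - θ) • x2 + θ • x1) X
          rw [e1, sub_sub_cancel, ← e1] at this
          linarith
        set σ := Real.sqrt (s - t2 + ε + θ * (t2 - t1)) with hσ
        have hθβ := mul_nonneg hθ.1 hβ
        have hσ0 : 0 ≤ σ := Real.sqrt_nonneg _
        have e4 : s - t2 ≤ σ ^ 2 := by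
          rw [hσ, Real.sq_sqrt (by linarith)]; linarith
        have e5 : Real.sqrt s ≤ σ + ρ := by
          rw [Real.sqrt_le_left (by positivity)]; nlinarith
        have hXn := norm_nonneg X
        have e6 : ρ ≤ σ + ‖X‖ := by
          rcases hcase with h | h
          · have : ρ ≤ σ := by
              by_contra hcc
              push Not at hcc
              nlinarith [mul_self_le_mul_self (by positivity) h2κ]
            linarith
          · linarith
        rw [hPe]; linarith)
    rw [Am_add ha] at this
    have e7 : x2 - y + (x1 - x2) = x1 - y := by abel
    rw [e7] at this
    refine this.trans ?_
    rw [mul_assoc N2, mul_div_assoc]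
    gcongr
    have f1 : ‖x1 - x2‖ ≤ 2 * ρ := (norm_sub_le _ _).trans (by linarith)
    have f2 : (t2 - t1) / P ^ (d + 4) ≤ ρ / P ^ (d + 3) := by
      rw [div_le_div_iff₀ (by positivity) (by positivity), pow_succ P (d + 3)]
      have : t2 - t1 ≤ ρ * P := by nlinarith
      calc _ ≤ ρ * P * P ^ (d + 3) := by gcongr
        _ = _ := by ring
    calc _ ≤ 2 * ρ / P ^ (d + 3) + ρ / P ^ (d + 3) := by gcongr
      _ = _ := by ring

lemma ker_diff (d : ℕ) {δ : ℝ} (hδ : 0 < δ) :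
    ∃ N : ℝ, 0 < N ∧ ∀ a : ℝ → Matrix (Fin d) (Fin d) ℝ, Adm δ a → ∀ (k m : Fin d) (ρ κ ε : ℝ),
      0 < ρ → 2 ≤ κ → 0 < ε → ε ≤ ρ ^ 2 → ∀ z1 ∈ cyl d ρ 0 0, ∀ z2 ∈ cyl d ρ 0 0,
      ∀ w : Pt d, w ∉ cyl d (κ * ρ) 0 0 →
        ‖ker a ε k m z1 w - ker a ε k m z2 w‖ ≤ if 0 < w.1 then N * ρ / prho w ^ (d + 3) else 0 := by
  obtain ⟨N, hN, H⟩ := ker_diff1 d hδ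
  refine ⟨N, hN, fun a ha k m ρ κ ε hρ hκ hε hερ z1 hz1 z2 hz2 w hn => ?_⟩
  split_ifs with hw
  · rcases le_total z1.1 z2.1 with h | h
    · exact H a ha k m ρ κ ε hρ hκ hε hερ z1 hz1 z2 hz2 h w hw hn
    · rw [norm_sub_rev]; exact H a ha k m ρ κ ε hρ hκ hε hερ z2 hz2 z1 hz1 h w hw hn
  · have a1 : ¬ z1.1 < w.1 := by have := hz1.1.1; linarith
    have a2 : ¬ z2.1 < w.1 := by have := hz2.1.1; linarith
    simp [ker, a1, a2]

lemma vol_cyl (d : ℕ) {R : ℝ} (hR : 0 < R) (t : ℝ) (x : Spc d) :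
    volume (cyl d R t x) = ENNReal.ofReal (R ^ (d + 2)) * volume (ball (0 : Spc d) 1) := by
  unfold cyl
  rw [Measure.volume_eq_prod, Measure.prod_prod, Real.volume_Ioo,
    Measure.addHaar_ball_of_pos _ _ hR, finrank_euclideanSpace_fin, ← mul_assoc,
    ← ENNReal.ofReal_mul (by nlinarith)]
  congr 2; ring

lemma vol_b1 (d : ℕ) : 0 < (volume (ball (0 : Spc d) 1)).toReal :=
  ENNReal.toReal_pos (measure_ball_pos _ _ one_pos).ne' measure_ball_lt_top.ne

lemma prho_cont {d : ℕ} : Continuous (prho (d := d)) := by unfold prho; fun_prop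

lemma maxF_ge {d : ℕ} (g : Pt d → ℝ) {S : ℝ} (hS : 0 < S) :
    ∫⁻ z in cyl d (2 * S) (-S ^ 2) 0, ENNReal.ofReal (g z) ≤
      ENNReal.ofReal ((2 * S) ^ (d + 2)) * volume (ball (0 : Spc d) 1) * maxF 0 g (0, 0) := by
  have h1 : ENNReal.ofReal ((2 * S) ^ (0:ℝ)) * aveLin (cyl d (2 * S) (-S ^ 2) 0) g ≤ maxF 0 g (0, 0) := by
    unfold maxF
    refine le_iSup_of_le (2 * S) (le_iSup_of_le (by positivity) (le_iSup_of_le (-S ^ 2)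
      (le_iSup_of_le 0 (le_iSup_of_le ?_ le_rfl))))
    refine ⟨⟨?_, ?_⟩, ?_⟩
    · simp; positivity
    · simp only; nlinarith
    · simp; positivity
  rw [Real.rpow_zero, ENNReal.ofReal_one, one_mul] at h1
  rw [← vol_cyl d (by positivity) (-S ^ 2) 0]
  unfold aveLin at h1
  have v0 : volume (cyl d (2 * S) (-S ^ 2) 0) ≠ 0 := by
    rw [vol_cyl d (by positivity)]
    have := (measure_ball_pos volume (0 : Spc d) one_pos).ne'
    have : 0 < (2 * S) ^ (d + 2) := by positivity
    simp_all
  have v1 : volume (cyl d (2 * S) (-S ^ 2) 0) ≠ ⊤ := by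
    rw [vol_cyl d (by positivity)]
    exact ENNReal.mul_ne_top ENNReal.ofReal_ne_top measure_ball_lt_top.ne
  calc _ = volume (cyl d (2 * S) (-S ^ 2) 0) * ((volume (cyl d (2 * S) (-S ^ 2) 0))⁻¹ *
        ∫⁻ z in cyl d (2 * S) (-S ^ 2) 0, ENNReal.ofReal (g z)) := by
        rw [← mul_assoc, ENNReal.mul_inv_cancel v0 v1, one_mul]
    _ ≤ _ := by gcongr

lemma far_int (d : ℕ) : ∃ N : ℝ, 0 < N ∧ ∀ (g : Pt d → ℝ) (R : ℝ), 0 < R →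
    ∫⁻ w in {w : Pt d | 0 < w.1 ∧ R ≤ prho w}, ENNReal.ofReal (g w) * ENNReal.ofReal (1 / prho w ^ (d + 3)) ≤
      ENNReal.ofReal (N / R) * maxF 0 g (0, 0) := by
  set b := (volume (ball (0 : Spc d) 1)).toReal with hb
  have hb0 : 0 < b := vol_b1 d
  have hbe : volume (ball (0 : Spc d) 1) = ENNReal.ofReal b :=
    (ENNReal.ofReal_toReal measure_ball_lt_top.ne).symm
  refine ⟨4 ^ (d + 2) * b * 2, by positivity, fun g R hR => ?_⟩
  set E : ℕ → Set (Pt d) := fun k => {w | 0 < w.1 ∧ 2 ^ k * R ≤ prho w ∧ prho w < 2 ^ (k + 1) * R} with hE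
  have hsub : {w : Pt d | 0 < w.1 ∧ R ≤ prho w} ⊆ ⋃ k, E k := by
    rintro w ⟨h1, h2⟩
    obtain ⟨k, hk1, hk2⟩ := exists_nat_pow_near ((one_le_div hR).2 h2) (one_lt_two)
    exact mem_iUnion.2 ⟨k, h1, (le_div_iff₀ hR).1 hk1, (div_lt_iff₀ hR).1 hk2⟩
  have hEm : ∀ k, MeasurableSet (E k) := by
    intro k
    have h1 : MeasurableSet {w : Pt d | 0 < w.1} := measurableSet_lt measurable_const measurable_fst
    have h2 : MeasurableSet {w : Pt d | 2 ^ k * R ≤ prho w} :=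
      measurableSet_le measurable_const prho_cont.measurable
    have h3 : MeasurableSet {w : Pt d | prho w < 2 ^ (k + 1) * R} :=
      measurableSet_lt prho_cont.measurable measurable_const
    exact h1.inter (h2.inter h3)
  have hk : ∀ k, ∫⁻ w in E k, ENNReal.ofReal (g w) * ENNReal.ofReal (1 / prho w ^ (d + 3)) ≤
      ENNReal.ofReal (4 ^ (d + 2) * b / R * (1 / 2) ^ k) * maxF 0 g (0, 0) := by
    intro k
    set S : ℝ := 2 ^ (k + 1) * R with hS
    have hS0 : 0 < S := by positivity
    have hss : E k ⊆ cyl d (2 * S) (-S ^ 2) 0 := by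
      rintro w ⟨h1, h2, h3⟩
      unfold prho at h3
      have n1 := norm_nonneg w.2
      have n2 := Real.sqrt_nonneg |w.1|
      have h4 : Real.sqrt |w.1| < S := by linarith
      rw [Real.sqrt_lt' hS0, abs_of_pos h1] at h4
      refine ⟨⟨?_, ?_⟩, ?_⟩
      · nlinarith
      · nlinarith
      · simp only [mem_ball, dist_zero_right]; linarith
    calc _ ≤ ∫⁻ w in E k, ENNReal.ofReal (g w) * ENNReal.ofReal (1 / (2 ^ k * R) ^ (d + 3)) := by
          refine setLIntegral_mono' (hEm k) fun w hw => ?_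
          have : 0 < prho w := lt_of_lt_of_le (by positivity) hw.2.1
          gcongr
          exact hw.2.1
      _ = (∫⁻ w in E k, ENNReal.ofReal (g w)) * ENNReal.ofReal (1 / (2 ^ k * R) ^ (d + 3)) :=
          lintegral_mul_const' _ _ ENNReal.ofReal_ne_top
      _ ≤ (ENNReal.ofReal ((2 * S) ^ (d + 2)) * volume (ball (0 : Spc d) 1) * maxF 0 g (0, 0)) *
            ENNReal.ofReal (1 / (2 ^ k * R) ^ (d + 3)) := by
          gcongr
          exact (lintegral_mono_set hss).trans (maxF_ge g hS0)
      _ = _ := by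
          rw [hbe, mul_right_comm, ← ENNReal.ofReal_mul (by positivity), ← ENNReal.ofReal_mul (by positivity)]
          congr 2
          rw [hS, pow_succ 2 k, show 2 * ((2:ℝ) ^ k * 2 * R) = 4 * (2 ^ k * R) by ring, mul_pow 4]
          rw [pow_succ (2 ^ k * R) (d + 2), one_div_pow]
          have : (0:ℝ) < 2 ^ k := by positivity
          field_simp
  calc _ ≤ ∫⁻ w in ⋃ k, E k, ENNReal.ofReal (g w) * ENNReal.ofReal (1 / prho w ^ (d + 3)) :=
        lintegral_mono_set hsub
    _ ≤ ∑' k, ∫⁻ w in E k, ENNReal.ofReal (g w) * ENNReal.ofReal (1 / prho w ^ (d + 3)) :=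
        lintegral_iUnion_le _ _
    _ ≤ ∑' k : ℕ, ENNReal.ofReal (4 ^ (d + 2) * b / R * (1 / 2) ^ k) * maxF 0 g (0, 0) :=
        ENNReal.tsum_le_tsum hk
    _ = _ := by
        rw [ENNReal.tsum_mul_right, ← ENNReal.ofReal_tsum_of_nonneg (fun k => by positivity)
          (summable_geometric_two.mul_left _), tsum_mul_left, tsum_geometric_two]
        congr 2; ring

/-- Statement helper: bounded measurable function with bounded support -/
structure Gd {d : ℕ} (g : Pt d → ℝ) : Prop where
  m : Measurable g
  b : ∃ M T : ℝ, 0 ≤ M ∧ ∀ w, |g w| ≤ (closedBall (0 : Pt d) T).indicator (fun _ => M) w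

lemma Gd.ig {d : ℕ} {g : Pt d → ℝ} (h : Gd g) : Integrable g := by
  obtain ⟨M, T, hM, hb⟩ := h.b
  have : Integrable ((closedBall (0 : Pt d) T).indicator (fun _ => M)) := by
    rw [integrable_indicator_iff measurableSet_closedBall]
    exact integrableOn_const (isCompact_closedBall _ _).measure_lt_top.ne
  exact this.mono' h.m.aestronglyMeasurable (Filter.Eventually.of_forall hb)

lemma Gd.igs {d : ℕ} {g : Pt d → ℝ} (h : Gd g) (s : ℝ) : Integrable (fun y => g (s, y)) := by
  obtain ⟨M, T, hM, hb⟩ := h.b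
  have : Integrable ((closedBall (0 : Spc d) T).indicator (fun _ => M)) := by
    rw [integrable_indicator_iff measurableSet_closedBall]
    exact integrableOn_const (isCompact_closedBall _ _).measure_lt_top.ne
  refine this.mono' (h.m.comp measurable_prodMk_left).aestronglyMeasurable
    (Filter.Eventually.of_forall fun y => (hb (s, y)).trans ?_)
  by_cases hy : y ∈ closedBall (0 : Spc d) T
  · rw [indicator_of_mem hy]
    exact indicator_le_self' (fun _ _ => hM) _
  · rw [indicator_of_notMem hy, indicator_of_notMem]
    intro hc; apply hy
    simp only [mem_closedBall, dist_zero_right, Prod.norm_def, sup_le_iff] at hc ⊢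
    exact hc.2

lemma Am_cont {d : ℕ} {δ : ℝ} {a : ℝ → Matrix (Fin d) (Fin d) ℝ} (h : Adm δ a) (ε : ℝ) (i j : Fin d) :
    Continuous fun p : ℝ × ℝ => Am a ε p.1 p.2 i j := by
  have e : (fun p : ℝ × ℝ => Am a ε p.1 p.2 i j) = fun p =>
      4 * Real.pi ^ 2 * (((∫ r in (0:ℝ)..p.2, a r i j) - ∫ r in (0:ℝ)..p.1, a r i j) + if i = j then ε else 0) := by
    ext p
    unfold Am
    rw [intervalIntegral.integral_interval_sub_left (h.ii i j _ _) (h.ii i j _ _)]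
  have hc : Continuous fun s => ∫ r in (0:ℝ)..s, a r i j :=
    intervalIntegral.continuous_primitive (fun _ _ => h.ii i j _ _) 0
  rw [e]
  have h1 := hc.comp continuous_fst (X := ℝ × ℝ) (Y := ℝ)
  have h2 := hc.comp continuous_snd (X := ℝ × ℝ) (Y := ℝ)
  exact ((h2.sub h1).add continuous_const).const_mul _

lemma qfAm_cont {d : ℕ} {δ : ℝ} {a : ℝ → Matrix (Fin d) (Fin d) ℝ} (h : Adm δ a) (ε : ℝ) :
    Continuous fun p : ℝ × ℝ × Spc d => qf (Am a ε p.1 p.2.1) p.2.2 := by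
  unfold qf
  refine continuous_finsetSum _ fun i _ => continuous_finsetSum _ fun j _ => ?_
  have : Continuous fun p : ℝ × ℝ × Spc d => Am a ε p.1 p.2.1 i j :=
    (Am_cont h ε i j).comp (continuous_fst.prodMk (continuous_fst.comp continuous_snd))
  fun_prop

def EE {d : ℕ} (a : ℝ → Matrix (Fin d) (Fin d) ℝ) (ε t s : ℝ) (ξ : Spc d) : ℝ :=
  if t < s then Real.exp (-qf (Am a ε t s) ξ) else 0

lemma EE_meas {d : ℕ} {δ : ℝ} {a : ℝ → Matrix (Fin d) (Fin d) ℝ} (h : Adm δ a) (ε : ℝ) :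
    Measurable fun p : ℝ × ℝ × Spc d => EE a ε p.1 p.2.1 p.2.2 := by
  unfold EE
  refine Measurable.ite (measurableSet_lt measurable_fst (measurable_fst.comp measurable_snd)) ?_ measurable_const
  exact (Real.continuous_exp.comp (qfAm_cont h ε).neg).measurable

lemma EE_nonneg {d : ℕ} (a : ℝ → Matrix (Fin d) (Fin d) ℝ) (ε t s : ℝ) (ξ : Spc d) : 0 ≤ EE a ε t s ξ := by
  unfold EE; split_ifs <;> positivity

lemma EE_le {d : ℕ} {δ : ℝ} {a : ℝ → Matrix (Fin d) (Fin d) ℝ} (h : Adm δ a) {ε : ℝ} (hε : 0 ≤ ε) (t s : ℝ)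
    (ξ : Spc d) : EE a ε t s ξ ≤ if t < s then Real.exp (-(4 * Real.pi ^ 2 * δ * (s - t + ε)) * ‖ξ‖ ^ 2) else 0 := by
  unfold EE
  split_ifs with hs
  · apply Real.exp_le_exp.2
    have := (Am_Ell h hε hs.le ξ).1
    linarith
  · exact le_rfl

lemma EE_le' {d : ℕ} {δ : ℝ} {a : ℝ → Matrix (Fin d) (Fin d) ℝ} (h : Adm δ a) {ε : ℝ} (hε : 0 ≤ ε) (t s : ℝ)
    (ξ : Spc d) : EE a ε t s ξ ≤ Real.exp (-(4 * Real.pi ^ 2 * δ * ε) * ‖ξ‖ ^ 2) := by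
  refine (EE_le h hε t s ξ).trans ?_
  split_ifs with hs
  · apply Real.exp_le_exp.2
    have hp := h.p
    have : 4 * Real.pi ^ 2 * δ * ε * ‖ξ‖ ^ 2 ≤ 4 * Real.pi ^ 2 * δ * (s - t + ε) * ‖ξ‖ ^ 2 := by
      gcongr; linarith
    linarith
  · positivity

lemma ker_eq {d : ℕ} (a : ℝ → Matrix (Fin d) (Fin d) ℝ) (ε : ℝ) (k m : Fin d) (z w : Pt d) :
    ker a ε k m z w = ∫ ξ : Spc d, ((mon [k, m] ξ * EE a ε z.1 w.1 ξ : ℝ) : ℂ) * ph (inner ℝ (z.2 - w.2) ξ) := by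
  unfold ker EE
  split_ifs with h
  · rfl
  · simp

lemma kint_meas {d : ℕ} {δ : ℝ} {a : ℝ → Matrix (Fin d) (Fin d) ℝ} (h : Adm δ a) (ε : ℝ) (k m : Fin d) :
    Measurable fun p : (Pt d × Pt d) × Spc d =>
      ((mon [k, m] p.2 * EE a ε p.1.1.1 p.1.2.1 p.2 : ℝ) : ℂ) * ph (inner ℝ (p.1.1.2 - p.1.2.2) p.2) := by
  have h1 : Measurable fun p : (Pt d × Pt d) × Spc d => EE a ε p.1.1.1 p.1.2.1 p.2 :=
    (EE_meas h ε).comp (g := fun p : ℝ × ℝ × Spc d => EE a ε p.1 p.2.1 p.2.2)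
      (f := fun p : (Pt d × Pt d) × Spc d => (p.1.1.1, p.1.2.1, p.2)) (by fun_prop)
  have h2 : Measurable fun p : (Pt d × Pt d) × Spc d => mon [k, m] p.2 :=
    (mon_cont [k, m]).measurable.comp measurable_snd
  have h3 : Measurable fun p : (Pt d × Pt d) × Spc d => ph (inner ℝ (p.1.1.2 - p.1.2.2) p.2) := by
    have := ph_cont
    exact Continuous.measurable (by fun_prop)
  exact (Complex.measurable_ofReal.comp (h2.mul h1)).mul h3

lemma ker_meas {d : ℕ} {δ : ℝ} {a : ℝ → Matrix (Fin d) (Fin d) ℝ} (h : Adm δ a) (ε : ℝ) (k m : Fin d) :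
    Measurable fun p : Pt d × Pt d => ker a ε k m p.1 p.2 := by
  simp only [ker_eq]
  exact ((kint_meas h ε k m).stronglyMeasurable.integral_prod_right (ν := (volume : Measure (Spc d)))
    (f := fun (p : Pt d × Pt d) (ξ : Spc d) => ((mon [k, m] ξ * EE a ε p.1.1 p.2.1 ξ : ℝ) : ℂ) *
      ph (inner ℝ (p.1.2 - p.2.2) ξ))).measurable

lemma ker_bdd {d : ℕ} {δ : ℝ} {a : ℝ → Matrix (Fin d) (Fin d) ℝ} (h : Adm δ a) {ε : ℝ} (hε : 0 < ε) (k m : Fin d) :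
    ∃ B : ℝ, ∀ z w : Pt d, ‖ker a ε k m z w‖ ≤ B := by
  have hp := h.p
  refine ⟨∫ ξ : Spc d, (‖ξ‖ + 0) ^ 2 * Real.exp (-(4 * Real.pi ^ 2 * δ * ε) * ‖ξ‖ ^ 2), fun z w => ?_⟩
  rw [ker_eq]
  refine norm_integral_le_of_norm_le (poly_gauss_integrable 2 (by positivity) le_rfl)
    (Filter.Eventually.of_forall fun ξ => ?_)
  rw [norm_mul, ph_norm, Complex.norm_real, Real.norm_eq_abs, abs_mul, abs_of_nonneg (EE_nonneg _ _ _ _ _), add_zero,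
      mul_one]
  gcongr
  · exact EE_nonneg _ _ _ _ _
  · exact mon_le [k, m] ξ
  · exact EE_le' h hε.le _ _ ξ

def VV {d : ℕ} (a : ℝ → Matrix (Fin d) (Fin d) ℝ) (ε : ℝ) (k m : Fin d) (g : Pt d → ℝ) (z : Pt d) : ℂ :=
  ∫ w : Pt d, ker a ε k m z w * (g w : ℂ)

lemma VV_int {d : ℕ} {δ : ℝ} {a : ℝ → Matrix (Fin d) (Fin d) ℝ} (h : Adm δ a) {ε : ℝ} (hε : 0 < ε) (k m : Fin d)
    {g : Pt d → ℝ} (hg : Gd g) (z : Pt d) : Integrable fun w : Pt d => ker a ε k m z w * (g w : ℂ) := by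
  obtain ⟨B, hB⟩ := ker_bdd h hε k m
  exact hg.ig.ofReal.bdd_mul ((ker_meas h ε k m).comp measurable_prodMk_left).aestronglyMeasurable
    (Filter.Eventually.of_forall fun w => hB z w)

lemma VV_meas {d : ℕ} {δ : ℝ} {a : ℝ → Matrix (Fin d) (Fin d) ℝ} (h : Adm δ a) (ε : ℝ) (k m : Fin d)
    {g : Pt d → ℝ} (hg : Gd g) : Measurable (VV a ε k m g) := by
  have h1 : Measurable fun p : Pt d × Pt d => ker a ε k m p.1 p.2 * (g p.2 : ℂ) :=
    (ker_meas h ε k m).mul (Complex.measurable_ofReal.comp (hg.m.comp measurable_snd))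
  exact (h1.stronglyMeasurable.integral_prod_right (ν := (volume : Measure (Pt d)))
    (f := fun (z w : Pt d) => ker a ε k m z w * (g w : ℂ))).measurable

def ghat {d : ℕ} (g : Pt d → ℝ) (s : ℝ) (ξ : Spc d) : ℂ := ∫ y : Spc d, ph (-inner ℝ ξ y) * (g (s, y) : ℂ)

lemma ghat_meas {d : ℕ} {g : Pt d → ℝ} (hg : Gd g) : Measurable fun p : ℝ × Spc d => ghat g p.1 p.2 := by
  have h1 : Measurable fun p : (ℝ × Spc d) × Spc d => ph (-inner ℝ p.1.2 p.2) * (g (p.1.1, p.2) : ℂ) := by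
    have := ph_cont
    refine Measurable.mul (Continuous.measurable (by fun_prop)) (Complex.measurable_ofReal.comp (hg.m.comp (by fun_prop)))
  exact (h1.stronglyMeasurable.integral_prod_right (ν := (volume : Measure (Spc d)))
    (f := fun (p : ℝ × Spc d) y => ph (-inner ℝ p.2 y) * (g (p.1, y) : ℂ))).measurable

def FT {d : ℕ} (a : ℝ → Matrix (Fin d) (Fin d) ℝ) (ε : ℝ) (k m : Fin d) (g : Pt d → ℝ) (t : ℝ) (ξ : Spc d) : ℂ :=
  ∫ s : ℝ, ((mon [k, m] ξ * EE a ε t s ξ : ℝ) : ℂ) * ghat g s ξ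

lemma big_int {d : ℕ} {δ : ℝ} {a : ℝ → Matrix (Fin d) (Fin d) ℝ} (h : Adm δ a) {ε : ℝ} (hε : 0 < ε) (k m : Fin d)
    {g : Pt d → ℝ} (hg : Gd g) (z : Pt d) : Integrable (fun p : Pt d × Spc d =>
      (((mon [k, m] p.2 * EE a ε z.1 p.1.1 p.2 : ℝ) : ℂ) * ph (inner ℝ (z.2 - p.1.2) p.2)) * (g p.1 : ℂ))
      (volume.prod volume) := by
  have hp := h.p
  have hI := hg.ig.abs.mul_prod (poly_gauss_integrable (d := d) 2 (b := 4 * Real.pi ^ 2 * δ * ε) (by positivity) le_rfl)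
  refine hI.mono' ?_ (Filter.Eventually.of_forall fun p => ?_)
  · refine (Measurable.mul ?_ (Complex.measurable_ofReal.comp (hg.m.comp measurable_fst))).aestronglyMeasurable
    exact (kint_meas h ε k m).comp (f := fun p : Pt d × Spc d => ((z, p.1), p.2)) (by fun_prop)
  · rw [norm_mul, norm_mul, ph_norm, Complex.norm_real, Complex.norm_real, Real.norm_eq_abs, Real.norm_eq_abs, abs_mul,
      abs_of_nonneg (EE_nonneg _ _ _ _ _), add_zero, mul_one, mul_comm]
    gcongr
    · exact EE_nonneg _ _ _ _ _
    · exact mon_le [k, m] p.2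
    · exact EE_le' h hε.le _ _ p.2

lemma VV_eq {d : ℕ} {δ : ℝ} {a : ℝ → Matrix (Fin d) (Fin d) ℝ} (h : Adm δ a) {ε : ℝ} (hε : 0 < ε) (k m : Fin d)
    {g : Pt d → ℝ} (hg : Gd g) (t : ℝ) (x : Spc d) :
    VV a ε k m g (t, x) = ∫ ξ : Spc d, ph (inner ℝ x ξ) * FT a ε k m g t ξ := by
  have hb := big_int h hε k m hg (t, x)
  unfold VV
  calc _ = ∫ w : Pt d, ∫ ξ : Spc d, (((mon [k, m] ξ * EE a ε t w.1 ξ : ℝ) : ℂ) * ph (inner ℝ (x - w.2) ξ)) * (g w : ℂ) := by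
        congr 1; ext w
        rw [ker_eq, integral_mul_const]
    _ = ∫ ξ : Spc d, ∫ w : Pt d, (((mon [k, m] ξ * EE a ε t w.1 ξ : ℝ) : ℂ) * ph (inner ℝ (x - w.2) ξ)) * (g w : ℂ) :=
        integral_integral_swap hb
    _ = _ := by
        refine integral_congr_ae ?_
        filter_upwards [hb.prod_left_ae] with ξ hξ
        rw [Measure.volume_eq_prod, integral_prod _ hξ]
        unfold FT
        rw [← integral_const_mul]
        congr 1; ext s
        unfold ghat
        rw [← integral_const_mul, ← integral_const_mul]
        congr 1; ext y
        simp only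
        rw [show (inner ℝ (x - y) ξ : ℝ) = inner ℝ x ξ + -inner ℝ ξ y by
          rw [inner_sub_left, real_inner_comm ξ y]; ring, ph_add]
        ring

lemma FT_integrable {d : ℕ} {δ : ℝ} {a : ℝ → Matrix (Fin d) (Fin d) ℝ} (h : Adm δ a) {ε : ℝ} (hε : 0 < ε) (k m : Fin d)
    {g : Pt d → ℝ} (hg : Gd g) (t : ℝ) : Integrable (FT a ε k m g t) := by
  have hb := big_int h hε k m hg (t, 0)
  have := hb.integral_prod_right
  refine this.congr ?_
  filter_upwards [hb.prod_left_ae] with ξ hξ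
  rw [Measure.volume_eq_prod, integral_prod _ hξ]
  unfold FT
  congr 1; ext s
  unfold ghat
  rw [← integral_const_mul]
  congr 1; ext y
  simp only
  rw [show (inner ℝ (0 - y) ξ : ℝ) = -inner ℝ ξ y by
          rw [inner_sub_left, real_inner_comm ξ y, inner_zero_left]; ring]
  ring

lemma FT_meas {d : ℕ} {δ : ℝ} {a : ℝ → Matrix (Fin d) (Fin d) ℝ} (h : Adm δ a) (ε : ℝ) (k m : Fin d)
    {g : Pt d → ℝ} (hg : Gd g) : Measurable fun p : ℝ × Spc d => FT a ε k m g p.1 p.2 := by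
  have h1 : Measurable fun p : (ℝ × Spc d) × ℝ =>
      ((mon [k, m] p.1.2 * EE a ε p.1.1 p.2 p.1.2 : ℝ) : ℂ) * ghat g p.2 p.1.2 := by
    refine Measurable.mul (Complex.measurable_ofReal.comp (Measurable.mul ?_ ?_)) ?_
    · exact (mon_cont [k, m]).measurable.comp (by fun_prop)
    · exact (EE_meas h ε).comp (f := fun p : (ℝ × Spc d) × ℝ => (p.1.1, p.2, p.1.2)) (by fun_prop)
    · exact (ghat_meas hg).comp (f := fun p : (ℝ × Spc d) × ℝ => (p.2, p.1.2)) (by fun_prop)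
  exact (h1.stronglyMeasurable.integral_prod_right (ν := (volume : Measure ℝ))
    (f := fun (p : ℝ × Spc d) s => ((mon [k, m] p.2 * EE a ε p.1 s p.2 : ℝ) : ℂ) * ghat g s p.2)).measurable

lemma cs_enn {α : Type*} [MeasurableSpace α] (μ : Measure α) {f g : α → ℝ≥0∞} (hf : AEMeasurable f μ)
    (hg : AEMeasurable g μ) :
    (∫⁻ x, f x * g x ∂μ) ^ 2 ≤ (∫⁻ x, f x ^ 2 ∂μ) * ∫⁻ x, g x ^ 2 ∂μ := by
  have h := ENNReal.lintegral_mul_le_Lp_mul_Lq μ Real.HolderConjugate.two_two hf hg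
  simp only [Pi.mul_apply] at h
  have e : ∀ x : ℝ≥0∞, x ^ (2:ℝ) = x ^ 2 := fun x => by
    rw [← ENNReal.rpow_natCast]; norm_num
  have e2 : ∀ x : ℝ≥0∞, (x ^ (1 / 2 : ℝ)) ^ 2 = x := fun x => by
    rw [← e, ← ENNReal.rpow_mul]; norm_num
  simp only [e] at h
  calc _ ≤ ((∫⁻ x, f x ^ 2 ∂μ) ^ (1 / 2 : ℝ) * (∫⁻ x, g x ^ 2 ∂μ) ^ (1 / 2 : ℝ)) ^ 2 := by gcongr
    _ = _ := by rw [mul_pow, e2, e2]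

lemma cs_w {α : Type*} [MeasurableSpace α] (μ : Measure α) {K h : α → ℝ≥0∞} (hK : Measurable K)
    (hh : Measurable h) :
    (∫⁻ x, K x * h x ∂μ) ^ 2 ≤ (∫⁻ x, K x ∂μ) * ∫⁻ x, K x * h x ^ 2 ∂μ := by
  have e2 : ∀ x : ℝ≥0∞, (x ^ (1 / 2 : ℝ)) ^ 2 = x := fun x => by
    rw [← ENNReal.rpow_natCast, ← ENNReal.rpow_mul]; norm_num
  have := cs_enn μ (f := fun x => K x ^ (1 / 2 : ℝ)) (g := fun x => K x ^ (1 / 2 : ℝ) * h x)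
    (hK.pow_const _).aemeasurable ((hK.pow_const _).mul hh).aemeasurable
  simp only [mul_pow, e2] at this
  refine le_trans (le_of_eq ?_) this
  congr 1
  refine lintegral_congr fun x => ?_
  rw [← mul_assoc, ← pow_two, e2]

lemma schur {k h : ℝ → ℝ≥0∞} (hk : Measurable k) (hh : Measurable h) :
    ∫⁻ t, (∫⁻ s, k (s - t) * h s) ^ 2 ≤ (∫⁻ r, k r) ^ 2 * ∫⁻ s, h s ^ 2 := by
  have hm : Measurable fun p : ℝ × ℝ => k (p.2 - p.1) := hk.comp (by fun_prop)
  calc _ ≤ ∫⁻ t, (∫⁻ r, k r) * ∫⁻ s, k (s - t) * h s ^ 2 := by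
        refine lintegral_mono fun t => ?_
        have := cs_w volume (K := fun s => k (s - t)) (h := h) (hk.comp (by fun_prop)) hh
        rwa [lintegral_sub_right_eq_self k t] at this
    _ = (∫⁻ r, k r) * ∫⁻ t, ∫⁻ s, k (s - t) * h s ^ 2 := by
        rw [lintegral_const_mul]
        exact Measurable.lintegral_prod_right' (f := fun p : ℝ × ℝ => k (p.2 - p.1) * h p.2 ^ 2)
          (hm.mul ((hh.comp measurable_snd).pow_const 2))
    _ = (∫⁻ r, k r) * ∫⁻ s, ∫⁻ t, k (s - t) * h s ^ 2 := by
        rw [lintegral_lintegral_swap]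
        exact (hm.mul ((hh.comp measurable_snd).pow_const 2)).aemeasurable
    _ = (∫⁻ r, k r) * ∫⁻ s, (∫⁻ r, k r) * h s ^ 2 := by
        congr 1
        refine lintegral_congr fun s => ?_
        have hks : Measurable fun t => k (s - t) := hk.comp (measurable_const.sub measurable_id)
        rw [lintegral_mul_const _ hks, lintegral_sub_left_eq_self k s]
    _ = _ := by
        rw [lintegral_const_mul _ (hh.pow_const 2), ← mul_assoc, pow_two]

lemma k_int {b c : ℝ} (hb : 0 ≤ b) (hc : 0 < c) :
    ∫⁻ r : ℝ, ENNReal.ofReal (if 0 < r then b * Real.exp (-(c * b) * r) else 0) ≤ ENNReal.ofReal c⁻¹ := by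
  rcases hb.eq_or_lt with rfl | hb
  · simp
  have e : (fun r : ℝ => ENNReal.ofReal (if 0 < r then b * Real.exp (-(c * b) * r) else 0)) =
      (Ioi (0:ℝ)).indicator fun r => ENNReal.ofReal (b * Real.exp (-(c * b) * r)) := by
    ext r
    by_cases h : 0 < r <;> simp [h]
  rw [e, lintegral_indicator measurableSet_Ioi, ← ofReal_integral_eq_lintegral_ofReal
    ((integrableOn_exp_mul_Ioi (by have := mul_pos hc hb; linarith) 0).const_mul b)
    (Filter.Eventually.of_forall fun r => by positivity), integral_const_mul,
    integral_exp_mul_Ioi (by have := mul_pos hc hb; linarith)]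
  apply le_of_eq; congr 1
  simp
  field_simp

lemma FT_le {d : ℕ} {δ : ℝ} {a : ℝ → Matrix (Fin d) (Fin d) ℝ} (h : Adm δ a) {ε : ℝ} (hε : 0 < ε) (k m : Fin d)
    (g : Pt d → ℝ) (t : ℝ) (ξ : Spc d) :
    ‖FT a ε k m g t ξ‖ₑ ≤ ∫⁻ s, ENNReal.ofReal (if 0 < s - t then
      ‖ξ‖ ^ 2 * Real.exp (-((4 * Real.pi ^ 2 * δ) * ‖ξ‖ ^ 2) * (s - t)) else 0) * ‖ghat g s ξ‖ₑ := by
  unfold FT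
  refine (enorm_integral_le_lintegral_enorm _).trans (lintegral_mono fun s => ?_)
  rw [enorm_mul]
  gcongr
  rw [← ofReal_norm, Complex.norm_real]
  apply ENNReal.ofReal_le_ofReal
  rw [Real.norm_eq_abs, abs_mul, abs_of_nonneg (EE_nonneg _ _ _ _ _)]
  have h1 := EE_le h hε.le t s ξ
  have hp := h.p
  by_cases hs : t < s
  · rw [if_pos hs] at h1
    rw [if_pos (by linarith)]
    refine mul_le_mul (mon_le [k, m] ξ) (h1.trans ?_) (EE_nonneg _ _ _ _ _) (by positivity)
    apply Real.exp_le_exp.2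
    have : 0 ≤ 4 * Real.pi ^ 2 * δ * ε * ‖ξ‖ ^ 2 := by positivity
    nlinarith
  · rw [if_neg hs] at h1
    rw [if_neg (by linarith)]
    have : EE a ε t s ξ = 0 := le_antisymm h1 (EE_nonneg _ _ _ _ _)
    rw [this]; simp

lemma VV_L2 {d : ℕ} {δ : ℝ} {a : ℝ → Matrix (Fin d) (Fin d) ℝ} (h : Adm δ a) {ε : ℝ} (hε : 0 < ε) (k m : Fin d)
    {g : Pt d → ℝ} (hg : Gd g) :
    ∫⁻ z, ‖VV a ε k m g z‖ₑ ^ 2 ≤ ENNReal.ofReal ((4 * Real.pi ^ 2 * δ)⁻¹) ^ 2 * ∫⁻ w, ‖g w‖ₑ ^ 2 := by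
  have hp := h.p
  have hc : 0 < 4 * Real.pi ^ 2 * δ := by positivity
  have hgm : Measurable fun p : ℝ × Spc d => ‖ghat g p.1 p.2‖ₑ ^ 2 := (ghat_meas hg).enorm.pow_const 2
  have hFm : Measurable fun p : ℝ × Spc d => ‖FT a ε k m g p.1 p.2‖ₑ ^ 2 := (FT_meas h ε k m hg).enorm.pow_const 2
  calc ∫⁻ z, ‖VV a ε k m g z‖ₑ ^ 2 = ∫⁻ t, ∫⁻ x, ‖VV a ε k m g (t, x)‖ₑ ^ 2 := by
        rw [Measure.volume_eq_prod, lintegral_prod _ ((VV_meas h ε k m hg).enorm.pow_const 2).aemeasurable]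
    _ ≤ ∫⁻ t, ∫⁻ ξ, ‖FT a ε k m g t ξ‖ₑ ^ 2 := by
        refine lintegral_mono fun t => ?_
        simp only [VV_eq h hε k m hg]
        exact bessel (FT_integrable h hε k m hg t)
    _ = ∫⁻ ξ, ∫⁻ t, ‖FT a ε k m g t ξ‖ₑ ^ 2 := lintegral_lintegral_swap hFm.aemeasurable
    _ ≤ ∫⁻ ξ : Spc d, ENNReal.ofReal ((4 * Real.pi ^ 2 * δ)⁻¹) ^ 2 * ∫⁻ s, ‖ghat g s ξ‖ₑ ^ 2 := by
        refine lintegral_mono fun ξ => ?_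
        have hkm : Measurable fun r : ℝ => ENNReal.ofReal (if 0 < r then
            ‖ξ‖ ^ 2 * Real.exp (-((4 * Real.pi ^ 2 * δ) * ‖ξ‖ ^ 2) * r) else 0) := by
          refine ENNReal.measurable_ofReal.comp (Measurable.ite measurableSet_Ioi ?_ measurable_const)
          fun_prop
        have hs := schur (h := fun s => ‖ghat g s ξ‖ₑ) hkm ((ghat_meas hg).comp measurable_prodMk_right).enorm
        calc _ ≤ _ := lintegral_mono fun t => pow_le_pow_left' (FT_le h hε k m g t ξ) 2
          _ ≤ _ := hs
          _ ≤ _ := by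
            gcongr
            exact k_int (sq_nonneg ‖ξ‖) hc
    _ = ENNReal.ofReal ((4 * Real.pi ^ 2 * δ)⁻¹) ^ 2 * ∫⁻ ξ : Spc d, ∫⁻ s, ‖ghat g s ξ‖ₑ ^ 2 := by
        rw [lintegral_const_mul]
        exact Measurable.lintegral_prod_left' (f := fun p : ℝ × Spc d => ‖ghat g p.1 p.2‖ₑ ^ 2) hgm
    _ = ENNReal.ofReal ((4 * Real.pi ^ 2 * δ)⁻¹) ^ 2 * ∫⁻ s, ∫⁻ ξ : Spc d, ‖ghat g s ξ‖ₑ ^ 2 := by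
        rw [← lintegral_lintegral_swap hgm.aemeasurable]
    _ ≤ ENNReal.ofReal ((4 * Real.pi ^ 2 * δ)⁻¹) ^ 2 * ∫⁻ s, ∫⁻ y : Spc d, ‖g (s, y)‖ₑ ^ 2 := by
        refine mul_le_mul_right (lintegral_mono fun s => ?_) _
        have := bessel_neg (F := fun y => (g (s, y) : ℂ)) (hg.igs s).ofReal
        refine this.trans (le_of_eq (lintegral_congr fun y => ?_))
        rw [← ofReal_norm, ← ofReal_norm, Complex.norm_real]
    _ = _ := by
        rw [Measure.volume_eq_prod, lintegral_prod _ (hg.m.enorm.pow_const 2).aemeasurable]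

lemma inv_tendsto {d : ℕ} {v : Spc d → ℂ} (hv : Integrable v) (x : Spc d) (hc : ContinuousAt v x) :
    Filter.Tendsto (fun c : ℝ => ∫ ξ : Spc d, ph (inner ℝ x ξ) * ((Real.exp (-c⁻¹ * ‖ξ‖ ^ 2) : ℝ) : ℂ) *
      ∫ y : Spc d, ph (-inner ℝ ξ y) * v y) Filter.atTop (nhds (v x)) := by
  refine (Real.tendsto_integral_gaussian_smul' hv hc).congr' ?_
  filter_upwards [Filter.Ioi_mem_atTop 0] with c (hcc : 0 < c)
  have J : Integrable (fun w : Spc d ↦ Complex.exp (- (c⁻¹ : ℂ) * ‖w‖ ^ 2 + 2 * Real.pi * Complex.I * (inner ℝ x w : ℝ))) :=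
    GaussianFourier.integrable_cexp_neg_mul_sq_norm_add (by simpa) _ _
  have F := (VectorFourier.integral_fourierIntegral_smul_eq_flip (L := innerₗ (Spc d))
      Real.continuous_fourierChar continuous_inner J hv)
  refine Eq.trans (Eq.symm ?_) (F.trans ?_)
  · refine integral_congr_ae (Filter.Eventually.of_forall fun w => ?_)
    simp only
    congr 1
    have := fourier_gaussian_innerProductSpace' (b := (c⁻¹ : ℂ)) (by simpa) x w
    rw [Real.fourier_eq] at this
    unfold VectorFourier.fourierIntegral
    simp only [innerₗ_apply_apply] at *
    rw [this]
    congr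
    · simp
    · simp; ring
  · refine integral_congr_ae (Filter.Eventually.of_forall fun ξ => ?_)
    simp only [smul_eq_mul]
    congr 1
    · unfold ph
      rw [Complex.ofReal_exp, ← Complex.exp_add]
      congr 1
      push_cast
      ring

lemma Dx_eq {d : ℕ} {u : Pt d → ℝ} (hu : CinfC u) (i : Fin d) :
    Dx i u = fun z => fderiv ℝ u z (0, EuclideanSpace.single i 1) := by
  ext z
  unfold Dx
  have h1 : HasFDerivAt u (fderiv ℝ u z) (z.1, z.2) := (hu.1.differentiable (by simp) z).hasFDerivAt
  have h2 := h1.comp z.2 (hasFDerivAt_prodMk_right z.1 z.2)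
  have h3 := h2.fderiv
  simp only [Function.comp_def] at h3
  rw [h3]
  simp

lemma Dt_eq {d : ℕ} {u : Pt d → ℝ} (hu : CinfC u) :
    Dt u = fun z => fderiv ℝ u z (1, 0) := by
  ext z
  unfold Dt
  have h1 : HasFDerivAt u (fderiv ℝ u z) (z.1, z.2) := (hu.1.differentiable (by simp) z).hasFDerivAt
  have h2 := h1.comp z.1 (hasFDerivAt_prodMk_left (𝕜 := ℝ) z.1 z.2)
  have h3 := h2.hasDerivAt.deriv
  simp only [Function.comp_def] at h3
  rw [h3]
  simp

lemma fd_CinfC {d : ℕ} {u : Pt d → ℝ} (hu : CinfC u) (e : Pt d) :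
    CinfC (fun z => fderiv ℝ u z e) := by
  refine ⟨?_, hu.2.fderiv_apply ℝ e⟩
  exact (hu.1.fderiv_right (m := (⊤ : ℕ∞)) (by simp)).clm_apply contDiff_const

lemma Dx_C {d : ℕ} {u : Pt d → ℝ} (hu : CinfC u) (i : Fin d) : CinfC (Dx i u) := by
  rw [Dx_eq hu]; exact fd_CinfC hu _

lemma Dt_C {d : ℕ} {u : Pt d → ℝ} (hu : CinfC u) : CinfC (Dt u) := by
  rw [Dt_eq hu]; exact fd_CinfC hu _

lemma Dxx_C {d : ℕ} {u : Pt d → ℝ} (hu : CinfC u) (i j : Fin d) : CinfC (Dxx i j u) := 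
  Dx_C (Dx_C hu j) i

lemma CinfC.gd {d : ℕ} {u : Pt d → ℝ} (hu : CinfC u) : Gd u := by
  refine ⟨hu.1.continuous.measurable, ?_⟩
  obtain ⟨M, hM⟩ := hu.2.exists_bound_of_continuous hu.1.continuous
  obtain ⟨T, hT⟩ := hu.2.isCompact.isBounded.subset_closedBall (0 : Pt d)
  refine ⟨M, T, (norm_nonneg _).trans (hM 0), fun w => ?_⟩
  by_cases hw : w ∈ closedBall (0 : Pt d) T
  · rw [indicator_of_mem hw]; exact hM w
  · rw [indicator_of_notMem hw, image_eq_zero_of_notMem_tsupport (fun h => hw (hT h))]; simp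

def Lu {d : ℕ} (a : ℝ → Matrix (Fin d) (Fin d) ℝ) (u : Pt d → ℝ) (z : Pt d) : ℝ :=
  Dt u z + ∑ i, ∑ j, a z.1 i j * Dxx i j u z

lemma Gd.add {d : ℕ} {f g : Pt d → ℝ} (hf : Gd f) (hg : Gd g) : Gd (fun z => f z + g z) := by
  refine ⟨hf.m.add hg.m, ?_⟩
  obtain ⟨M, T, hM, hb⟩ := hf.b
  obtain ⟨M', T', hM', hb'⟩ := hg.b
  refine ⟨M + M', max T T', by positivity, fun w => (abs_add_le _ _).trans ?_⟩
  have h1 := (hb w).trans (indicator_le_indicator_of_subset (closedBall_subset_closedBall (le_max_left T T')) (fun _ => hM) w)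
  have h2 := (hb' w).trans (indicator_le_indicator_of_subset (closedBall_subset_closedBall (le_max_right T T')) (fun _ => hM') w)
  rw [indicator_add]
  exact add_le_add h1 h2

lemma Gd.mul {d : ℕ} {f g : Pt d → ℝ} (hf : Gd f) (hg : Measurable g) {B : ℝ} (hB : ∀ z, |g z| ≤ B) :
    Gd (fun z => g z * f z) := by
  refine ⟨hg.mul hf.m, ?_⟩
  obtain ⟨M, T, hM, hb⟩ := hf.b
  have hB0 := (abs_nonneg _).trans (hB 0)
  refine ⟨B * M, T, by positivity, fun w => ?_⟩
  rw [abs_mul]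
  refine (mul_le_mul (hB w) (hb w) (abs_nonneg _) hB0).trans (le_of_eq ?_)
  by_cases hw : w ∈ closedBall (0 : Pt d) T
  · simp [indicator_of_mem hw]
  · simp [indicator_of_notMem hw]

lemma Gd.zero {d : ℕ} : Gd (fun _ : Pt d => (0 : ℝ)) := ⟨measurable_const, 0, 0, le_rfl, by simp⟩

lemma Gd.sum {d : ℕ} {ι : Type*} {f : ι → Pt d → ℝ} (s : Finset ι) (hf : ∀ i, Gd (f i)) :
    Gd (fun z => ∑ i ∈ s, f i z) := by
  classical
  induction s using Finset.induction_on with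
  | empty => simpa using Gd.zero
  | insert i s hi ih => simp only [Finset.sum_insert hi]; exact (hf i).add ih

lemma Lu_gd {d : ℕ} {δ : ℝ} {a : ℝ → Matrix (Fin d) (Fin d) ℝ} (h : Adm δ a) {u : Pt d → ℝ} (hu : CinfC u) : Gd (Lu a u) := by
  refine (Dt_C hu).gd.add (Gd.sum _ fun i => Gd.sum _ fun j => ?_)
  exact (Dxx_C hu i j).gd.mul (g := fun z => a z.1 i j) ((h.mij i j).comp measurable_fst) (B := δ⁻¹) (fun z => inS_entry h.p (h.s _) i j)

lemma prim_lip {E : Type*} [NormedAddCommGroup E] [NormedSpace ℝ E] {g : ℝ → E} {t T : ℝ} (htT : t ≤ T)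
    (hi : IntervalIntegrable g volume t T) {B : ℝ} (hB : ∀ s ∈ Icc t T, ‖g s‖ ≤ B) :
    LipschitzOnWith (Real.toNNReal B) (fun s => ∫ r in t..s, g r) (Icc t T) := by
  refine LipschitzOnWith.of_dist_le_mul fun x hx y hy => ?_
  have hB0 : 0 ≤ B := (norm_nonneg _).trans (hB t (left_mem_Icc.2 htT))
  have hs : ∀ z ∈ Icc t T, IntervalIntegrable g volume t z := fun z hz =>
    hi.mono_set (by rw [uIcc_of_le hz.1, uIcc_of_le htT]; exact Icc_subset_Icc_right hz.2)
  rw [dist_eq_norm, intervalIntegral.integral_interval_sub_left (hs x hx) (hs y hy), Real.coe_toNNReal _ hB0,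
    Real.dist_eq]
  refine intervalIntegral.norm_integral_le_of_norm_le_const fun z hz => hB z ?_
  have := uIoc_subset_uIcc hz
  exact (uIcc_subset_Icc hy hx) this

lemma exp_neg_lip : LipschitzOnWith 1 (fun x : ℝ => Real.exp (-x)) (Ici 0) := by
  refine (convex_Ici 0).lipschitzOnWith_of_nnnorm_hasDerivWithin_le (f' := fun x => Real.exp (-x) * (-1)) 
    (fun x _ => ((hasDerivAt_neg x).exp).hasDerivWithinAt) fun x hx => ?_
  rw [← NNReal.coe_le_coe]
  simpa using hx

lemma duh {q : ℝ → ℝ} {U U' : ℝ → ℂ} (hq : Measurable q) {B : ℝ} (hq0 : ∀ s, 0 ≤ q s) (hqB : ∀ s, q s ≤ B)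
    (hU : ∀ s, HasDerivAt U (U' s) s) (hU' : Continuous U') {t T : ℝ} (htT : t ≤ T) :
    ∫ s in t..T, ((Real.exp (-∫ r in t..s, q r) : ℝ) : ℂ) * (U' s - q s * U s) =
      ((Real.exp (-∫ r in t..T, q r) : ℝ) : ℂ) * U T - U t := by
  have hqi : ∀ x y, IntervalIntegrable q volume x y := fun x y => by
    refine (intervalIntegrable_const (c := B)).mono_fun hq.aestronglyMeasurable (Filter.Eventually.of_forall fun s => ?_)
    simp only [Real.norm_eq_abs]
    rw [abs_of_nonneg (hq0 s)]
    exact (hqB s).trans (le_abs_self _)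
  have hUc : Continuous U := continuous_iff_continuousAt.2 fun s => (hU s).continuousAt
  set Q : ℝ → ℝ := fun s => ∫ r in t..s, q r with hQ
  have hQc : Continuous Q := intervalIntegral.continuous_primitive (fun _ _ => hqi _ _) t
  set w : ℝ → ℝ := fun s => Real.exp (-Q s) with hw
  have hwc : Continuous w := by fun_prop
  set g : ℝ → ℂ := fun s => (w s : ℂ) * (U' s - q s * U s) with hg
  have hgm : Measurable g := by
    have : Measurable fun s => (q s : ℂ) := Complex.measurable_ofReal.comp hq
    have h1 := hUc.measurable
    have h2 := hU'.measurable
    have h3 : Measurable fun s => (w s : ℂ) := Complex.measurable_ofReal.comp hwc.measurable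
    fun_prop
  have hQ0 : ∀ s ∈ Icc t T, 0 ≤ Q s := fun s hs =>
    intervalIntegral.integral_nonneg hs.1 fun r _ => hq0 r
  obtain ⟨M, hM⟩ := (isCompact_Icc (a := t) (b := T)).exists_bound_of_continuousOn
    ((by fun_prop : Continuous fun s => w s * (‖U' s‖ + B * ‖U s‖)).continuousOn)
  have hgb : ∀ s ∈ Icc t T, ‖g s‖ ≤ M := fun s hs => by
    refine le_trans ?_ ((le_abs_self _).trans (hM s hs))
    rw [hg]
    simp only [norm_mul, Complex.norm_real, Real.norm_eq_abs]
    rw [abs_of_pos (Real.exp_pos _)]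
    refine mul_le_mul_of_nonneg_left ((norm_sub_le _ _).trans ?_) (Real.exp_pos _).le
    rw [norm_mul, Complex.norm_real, Real.norm_eq_abs, abs_of_nonneg (hq0 s)]
    gcongr
    exact hqB s
  have hgi : IntervalIntegrable g volume t T := by
    rw [intervalIntegrable_iff_integrableOn_Icc_of_le htT]
    exact Measure.integrableOn_of_bounded (by simp) hgm.aestronglyMeasurable
      ((ae_restrict_iff' measurableSet_Icc).2 (Filter.Eventually.of_forall hgb))
  have huI : uIcc t T = Icc t T := uIcc_of_le htT
  have a1 : AbsolutelyContinuousOnInterval (fun s => ∫ r in t..s, g r) t T := by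
    refine LipschitzOnWith.absolutelyContinuousOnInterval (K := Real.toNNReal M) ?_
    rw [huI]; exact prim_lip htT hgi hgb
  have a2 : AbsolutelyContinuousOnInterval w t T := by
    refine LipschitzOnWith.absolutelyContinuousOnInterval (K := 1 * Real.toNNReal B) ?_
    rw [huI]
    refine exp_neg_lip.comp (prim_lip htT (hqi _ _) fun s _ => ?_) fun s hs => hQ0 s hs
    rw [Real.norm_eq_abs, abs_of_nonneg (hq0 s)]; exact hqB s
  have a3 : AbsolutelyContinuousOnInterval U t T := by
    refine ContDiffOn.absolutelyContinuousOnInterval (ContDiff.contDiffOn ?_)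
    rw [contDiff_one_iff_deriv]
    refine ⟨fun s => (hU s).differentiableAt, ?_⟩
    rwa [show deriv U = U' from funext fun s => (hU s).deriv]
  obtain ⟨C, hC⟩ := AbsolutelyContinuousOnInterval.const_of_ae_hasDerivAt_zero ((a2.smul a3).sub a1) (by
    filter_upwards [hgi.ae_hasDerivAt_integral, (hqi t T).ae_hasDerivAt_integral] with s h1 h2 hs
    have h1 := h1 hs t left_mem_uIcc
    have h2 := h2 hs t left_mem_uIcc
    have h3 : HasDerivAt w (w s * (-q s)) s := h2.neg.exp
    have h4 := (h3.smul (hU s)).sub h1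
    convert h4 using 1
    simp only [hg, Complex.real_smul]
    push_cast
    ring)
  have e1 := hC t left_mem_uIcc
  have e2 := hC T right_mem_uIcc
  simp only [Pi.sub_apply, Pi.smul_apply', intervalIntegral.integral_same, sub_zero] at e1 e2
  have hwt : w t = 1 := by simp [hw, hQ]
  rw [← e1, hwt, one_smul, Complex.real_smul] at e2
  linear_combination -e2

lemma Gd.igp {d : ℕ} {g : Pt d → ℝ} (h : Gd g) (s : ℝ) (ξ : Spc d) :
    Integrable (fun y => ph (-inner ℝ ξ y) * (g (s, y) : ℂ)) := by
  have h1 : Integrable fun y => (g (s, y) : ℂ) := (h.igs s).ofReal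
  refine h1.bdd_mul (c := 1) ?_ (Filter.Eventually.of_forall fun y => (ph_norm _).le)
  exact (ph_cont.comp (by fun_prop)).aestronglyMeasurable

lemma ph_hasF {d : ℕ} (ξ y : Spc d) : HasFDerivAt (fun y : Spc d => ph (-inner ℝ ξ y))
    ((-(2 * Real.pi * Complex.I) * ph (-inner ℝ ξ y)) • (Complex.ofRealCLM.comp (innerSL ℝ ξ))) y := by
  have h1 : HasFDerivAt (fun y : Spc d => (Complex.ofRealCLM.comp (innerSL ℝ ξ)) y)
      (Complex.ofRealCLM.comp (innerSL ℝ ξ)) y := ContinuousLinearMap.hasFDerivAt _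
  have h2 := (h1.const_mul (-(2 * Real.pi * Complex.I))).cexp
  refine (h2.congr_of_eventuallyEq (Filter.Eventually.of_forall fun z => ?_)).congr_fderiv ?_
  · simp only [ph, ContinuousLinearMap.comp_apply, Complex.ofRealCLM_apply, innerSL_apply_apply]
    congr 1; push_cast; ring
  · ext z
    simp only [ph, ContinuousLinearMap.comp_apply, Complex.ofRealCLM_apply, innerSL_apply_apply, 
      smul_apply, smul_eq_mul]
    have e : Complex.exp (((2 * Real.pi * -inner ℝ ξ y : ℝ) : ℂ) * Complex.I) =
        Complex.exp (-(2 * Real.pi * Complex.I) * (inner ℝ ξ y : ℝ)) := by congr 1; push_cast; ring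
    rw [e]; ring

lemma sl_diff {d : ℕ} {u : Pt d → ℝ} (hu : CinfC u) (t : ℝ) : Differentiable ℝ fun y => u (t, y) :=
  (hu.1.differentiable (by simp)).comp ((differentiable_const t).prodMk differentiable_id)

lemma sl_fd {d : ℕ} {u : Pt d → ℝ} (hu : CinfC u) (i : Fin d) (t : ℝ) (y : Spc d) :
    fderiv ℝ (fun y => (u (t, y) : ℂ)) y (EuclideanSpace.single i 1) = (Dx i u (t, y) : ℂ) := by
  have h := Complex.ofRealCLM.hasFDerivAt.comp y ((sl_diff hu t) y).hasFDerivAt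
  have h2 := h.fderiv
  simp only [Function.comp_def, Complex.ofRealCLM_apply] at h2
  rw [h2]; rfl

lemma ghat_Dx {d : ℕ} {u : Pt d → ℝ} (hu : CinfC u) (i : Fin d) (t : ℝ) (ξ : Spc d) :
    ghat (Dx i u) t ξ = 2 * Real.pi * Complex.I * ξ i * ghat u t ξ := by
  have hi : ∀ y : Spc d, fderiv ℝ (fun y : Spc d => ph (-inner ℝ ξ y)) y (EuclideanSpace.single i 1) * (u (t, y) : ℂ)
      = (-(2 * Real.pi * Complex.I) * ξ i) * (ph (-inner ℝ ξ y) * (u (t, y) : ℂ)) := fun y => by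
    rw [(ph_hasF ξ y).fderiv]
    simp [EuclideanSpace.inner_single_right]
    ring
  have := integral_mul_fderiv_eq_neg_fderiv_mul_of_integrable (μ := (volume : Measure (Spc d)))
    (f := fun y : Spc d => ph (-inner ℝ ξ y)) (g := fun y => (u (t, y) : ℂ)) (v := EuclideanSpace.single i 1)
    (by simp only [hi]; exact (hu.gd.igp t ξ).const_mul _)
    (by simp only [sl_fd hu]; exact (Dx_C hu i).gd.igp t ξ) (hu.gd.igp t ξ)
    (fun x _ => (ph_hasF ξ x).differentiableAt)
    (fun x _ => (Complex.ofRealCLM.differentiable.comp (sl_diff hu t)) x)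
  simp only [sl_fd hu, hi, integral_const_mul] at this
  unfold ghat
  rw [this]
  ring

lemma ghat_Dxx {d : ℕ} {u : Pt d → ℝ} (hu : CinfC u) (k m : Fin d) (t : ℝ) (ξ : Spc d) :
    ghat (Dxx k m u) t ξ = -(4 * Real.pi ^ 2 * (ξ k * ξ m)) * ghat u t ξ := by
  unfold Dxx
  rw [ghat_Dx (Dx_C hu m), ghat_Dx hu]
  linear_combination (4 * Real.pi ^ 2 * (ξ k * ξ m)) * ghat u t ξ * Complex.I_sq

lemma sl_dt {d : ℕ} {u : Pt d → ℝ} (hu : CinfC u) (t : ℝ) (y : Spc d) :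
    HasDerivAt (fun s => u (s, y)) (Dt u (t, y)) t := by
  have : Differentiable ℝ fun s => u (s, y) :=
    (hu.1.differentiable (by simp)).comp (differentiable_id.prodMk (differentiable_const y))
  exact (this t).hasDerivAt

lemma Gd.slice {d : ℕ} {g : Pt d → ℝ} (h : Gd g) : ∃ M T : ℝ, 0 ≤ M ∧
    (∀ s y, |g (s, y)| ≤ (closedBall (0 : Spc d) T).indicator (fun _ => M) y) ∧
    (∀ s y, T < s → g (s, y) = 0) := by
  obtain ⟨M, T, hM, hb⟩ := h.b
  refine ⟨M, T, hM, fun s y => (hb (s, y)).trans ?_, fun s y hs => ?_⟩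
  · by_cases hy : y ∈ closedBall (0 : Spc d) T
    · rw [indicator_of_mem hy]
      exact indicator_le_self' (fun _ _ => hM) _
    · rw [indicator_of_notMem hy, indicator_of_notMem]
      intro hc; apply hy
      simp only [mem_closedBall, dist_zero_right, Prod.norm_def, sup_le_iff] at hc ⊢
      exact hc.2
  · have := hb (s, y)
    rw [indicator_of_notMem] at this
    · exact abs_nonpos_iff.1 this
    · intro hc
      simp only [mem_closedBall, dist_zero_right, Prod.norm_def, sup_le_iff, Real.norm_eq_abs] at hc
      exact absurd hs (not_lt.2 ((le_abs_self _).trans hc.1))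

lemma ghat_dt {d : ℕ} {u : Pt d → ℝ} (hu : CinfC u) (ξ : Spc d) (t : ℝ) :
    HasDerivAt (fun s => ghat u s ξ) (ghat (Dt u) t ξ) t := by
  obtain ⟨M, T, hM, hb, -⟩ := (Dt_C hu).gd.slice
  have hbi : Integrable ((closedBall (0 : Spc d) T).indicator (fun _ => M)) := by
    rw [integrable_indicator_iff measurableSet_closedBall]
    exact integrableOn_const (isCompact_closedBall _ _).measure_lt_top.ne
  refine (hasDerivAt_integral_of_dominated_loc_of_deriv_le (s := univ) (bound := (closedBall (0 : Spc d) T).indicator (fun _ => M))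
    (F := fun s y => ph (-inner ℝ ξ y) * (u (s, y) : ℂ)) (F' := fun s y => ph (-inner ℝ ξ y) * (Dt u (s, y) : ℂ))
    Filter.univ_mem (Filter.Eventually.of_forall fun s => (hu.gd.igp s ξ).1) (hu.gd.igp t ξ) ((Dt_C hu).gd.igp t ξ).1
    (Filter.Eventually.of_forall fun y s _ => ?_) hbi (Filter.Eventually.of_forall fun y s _ => ?_)).2
  · rw [norm_mul, ph_norm, one_mul, Complex.norm_real]; exact hb s y
  · exact (sl_dt hu s y).ofReal_comp.const_mul _

lemma ghat_Lu {d : ℕ} (a : ℝ → Matrix (Fin d) (Fin d) ℝ) {u : Pt d → ℝ} (hu : CinfC u) (s : ℝ) (ξ : Spc d) :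
    ghat (Lu a u) s ξ = ghat (Dt u) s ξ - ((4 * Real.pi ^ 2 * qf (a s) ξ : ℝ) : ℂ) * ghat u s ξ := by
  have e : ∀ y : Spc d, ph (-inner ℝ ξ y) * (Lu a u (s, y) : ℂ) = ph (-inner ℝ ξ y) * (Dt u (s, y) : ℂ) +
      ∑ i, ∑ j, (a s i j : ℂ) * (ph (-inner ℝ ξ y) * (Dxx i j u (s, y) : ℂ)) := fun y => by
    unfold Lu
    push_cast
    rw [mul_add, Finset.mul_sum]
    congr 1
    refine Finset.sum_congr rfl fun i _ => ?_
    rw [Finset.mul_sum]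
    refine Finset.sum_congr rfl fun j _ => by ring
  have hI : ∀ i j, Integrable fun y => (a s i j : ℂ) * (ph (-inner ℝ ξ y) * (Dxx i j u (s, y) : ℂ)) := fun i j =>
    ((Dxx_C hu i j).gd.igp s ξ).const_mul _
  unfold ghat
  simp only [e]
  rw [integral_add ((Dt_C hu).gd.igp s ξ) (integrable_finsetSum _ fun i _ => integrable_finsetSum _ fun j _ => hI i j),
    sub_eq_add_neg]
  congr 1
  rw [integral_finsetSum _ fun i _ => integrable_finsetSum _ fun j _ => hI i j]
  have : ∀ i, ∫ y, ∑ j, (a s i j : ℂ) * (ph (-inner ℝ ξ y) * (Dxx i j u (s, y) : ℂ)) =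
      ∑ j, (a s i j : ℂ) * (-(4 * Real.pi ^ 2 * (ξ i * ξ j)) * ghat u s ξ) := fun i => by
    rw [integral_finsetSum _ fun j _ => hI i j]
    refine Finset.sum_congr rfl fun j _ => ?_
    rw [integral_const_mul, ← ghat_Dxx hu]; rfl
  simp only [this]
  unfold qf
  push_cast
  rw [Finset.mul_sum, ← neg_mul, ← Finset.sum_neg_distrib, Finset.sum_mul]
  refine Finset.sum_congr rfl fun i _ => ?_
  rw [Finset.mul_sum, ← Finset.sum_neg_distrib, Finset.sum_mul]
  refine Finset.sum_congr rfl fun j _ => ?_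
  unfold ghat
  ring

lemma FT_Lu {d : ℕ} {δ : ℝ} {a : ℝ → Matrix (Fin d) (Fin d) ℝ} (h : Adm δ a) {u : Pt d → ℝ} (hu : CinfC u)
    (ε : ℝ) (k m : Fin d) (t : ℝ) (ξ : Spc d) :
    ((4 * Real.pi ^ 2 : ℝ) : ℂ) * FT a ε k m (Lu a u) t ξ =
      ((Real.exp (-(4 * Real.pi ^ 2 * ε) * ‖ξ‖ ^ 2) : ℝ) : ℂ) * ghat (Dxx k m u) t ξ := by
  obtain ⟨M, T, hM, -, hT⟩ := (Lu_gd h hu).slice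
  obtain ⟨M', T', hM', -, hT'⟩ := hu.gd.slice
  set S := max t (max T T' + 1) with hS
  have htS : t ≤ S := le_max_left _ _
  have hTS : T < S := lt_of_lt_of_le (by linarith [le_max_left T T']) (le_max_right _ _)
  have hTS' : T' < S := lt_of_lt_of_le (by linarith [le_max_right T T']) (le_max_right _ _)
  have z1 : ∀ s, S ≤ s → ghat (Lu a u) s ξ = 0 := fun s hs => by
    unfold ghat
    simp [hT s _ (hTS.trans_le hs)]
  have z2 : ghat u S ξ = 0 := by
    unfold ghat
    simp [hT' S _ hTS']
  have D := duh (q := fun r => 4 * Real.pi ^ 2 * qf (a r) ξ) (U := fun s => ghat u s ξ) (U' := fun s => ghat (Dt u) s ξ)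
    (B := 4 * Real.pi ^ 2 * (δ⁻¹ * ‖ξ‖ ^ 2)) (t := t) (T := S)
    (by
      unfold qf
      have := h.mij
      fun_prop)
    (fun s => by
      have := (inS_qf (h.s s) ξ).1
      have h0 := h.p
      have : 0 ≤ qf (a s) ξ := le_trans (by positivity) this
      positivity)
    (fun s => by
      have := (inS_qf (h.s s) ξ).2
      gcongr)
    (ghat_dt hu ξ) (continuous_iff_continuousAt.2 fun s => (ghat_dt (Dt_C hu) ξ s).continuousAt) htS
  simp only [z2, mul_zero, zero_sub] at D
  have E1 : ∫ s, ((EE a ε t s ξ : ℝ) : ℂ) * ghat (Lu a u) s ξ =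
      ((Real.exp (-(4 * Real.pi ^ 2 * ε) * ‖ξ‖ ^ 2) : ℝ) : ℂ) * (-ghat u t ξ) := by
    rw [← D, ← intervalIntegral.integral_const_mul, intervalIntegral.integral_of_le htS, ← integral_indicator measurableSet_Ioc]
    refine integral_congr_ae (Filter.Eventually.of_forall fun s => ?_)
    simp only
    by_cases hs : s ∈ Ioc t S
    · rw [indicator_of_mem hs, ← mul_assoc]
      rw [ghat_Lu a hu]
      congr 1
      unfold EE
      rw [if_pos hs.1, ← Complex.ofReal_mul, ← Real.exp_add, qf_Am h, intervalIntegral.integral_const_mul]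
      congr 2
      ring
    · rw [indicator_of_notMem hs]
      by_cases hst : t < s
      · rw [z1 s (not_lt.1 fun hc => hs ⟨hst, hc.le⟩), mul_zero]
      · unfold EE; rw [if_neg hst]; simp
  have E2 : FT a ε k m (Lu a u) t ξ = ((mon [k, m] ξ : ℝ) : ℂ) * ∫ s, ((EE a ε t s ξ : ℝ) : ℂ) * ghat (Lu a u) s ξ := by
    unfold FT
    rw [← integral_const_mul]
    refine integral_congr_ae (Filter.Eventually.of_forall fun s => ?_)
    simp only
    push_cast
    ring
  rw [E2, E1, ghat_Dxx hu]
  simp only [mon, List.map_cons, List.map_nil, List.prod_cons, List.prod_nil]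
  push_cast
  ring

lemma repr_tendsto {d : ℕ} {δ : ℝ} {a : ℝ → Matrix (Fin d) (Fin d) ℝ} (h : Adm δ a) {u : Pt d → ℝ} (hu : CinfC u)
    (k m : Fin d) (z : Pt d) :
    Filter.Tendsto (fun c : ℝ => ((4 * Real.pi ^ 2 : ℝ) : ℂ) * VV a ((4 * Real.pi ^ 2 * c)⁻¹) k m (Lu a u) z) Filter.atTop
      (nhds (Dxx k m u z : ℂ)) := by
  obtain ⟨t, x⟩ := z
  have hc : Continuous fun y => (Dxx k m u (t, y) : ℂ) :=
    Complex.continuous_ofReal.comp ((Dxx_C hu k m).1.continuous.comp (by fun_prop))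
  refine (inv_tendsto (v := fun y => (Dxx k m u (t, y) : ℂ)) ((Dxx_C hu k m).gd.igs t).ofReal x hc.continuousAt).congr' ?_
  filter_upwards [Filter.Ioi_mem_atTop 0] with c (hcc : 0 < c)
  rw [VV_eq h (by positivity) k m (Lu_gd h hu), ← integral_const_mul]
  refine integral_congr_ae (Filter.Eventually.of_forall fun ξ => ?_)
  simp only
  have := FT_Lu h hu ((4 * Real.pi ^ 2 * c)⁻¹) k m t ξ
  rw [show 4 * Real.pi ^ 2 * (4 * Real.pi ^ 2 * c)⁻¹ = c⁻¹ by field_simp] at this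
  unfold ghat at this
  rw [mul_assoc, ← this]
  ring

def Pm (d : ℕ) (ρ : ℝ) : Measure (Pt d) := (volume (cyl d ρ 0 0))⁻¹ • volume.restrict (cyl d ρ 0 0)

lemma cyl_meas (d : ℕ) (R t : ℝ) (x : Spc d) : MeasurableSet (cyl d R t x) :=
  measurableSet_Ioo.prod measurableSet_ball

lemma vol_cyl_pos (d : ℕ) {R : ℝ} (hR : 0 < R) : volume (cyl d R 0 0) ≠ 0 := by
  rw [vol_cyl d hR]
  refine mul_ne_zero ?_ (measure_ball_pos _ _ one_pos).ne'
  rw [ne_eq, ENNReal.ofReal_eq_zero, not_le]; positivity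

lemma vol_cyl_top (d : ℕ) {R : ℝ} (hR : 0 < R) : volume (cyl d R 0 0) ≠ ∞ := by
  rw [vol_cyl d hR]
  exact ENNReal.mul_ne_top ENNReal.ofReal_ne_top measure_ball_lt_top.ne

lemma Pm_prob (d : ℕ) {ρ : ℝ} (hρ : 0 < ρ) : IsProbabilityMeasure (Pm d ρ) := by
  constructor
  simp only [Pm, Measure.smul_apply, Measure.restrict_apply_univ, smul_eq_mul]
  exact ENNReal.inv_mul_cancel (vol_cyl_pos d hρ) (vol_cyl_top d hρ)

lemma ave_Pm (d : ℕ) (ρ : ℝ) {E : Type*} [NormedAddCommGroup E] [NormedSpace ℝ E] (g : Pt d → E) :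
    ⨍ z in cyl d ρ 0 0, g z = ∫ z, g z ∂(Pm d ρ) := by
  rw [average]; simp only [Pm, Measure.restrict_apply_univ]

lemma mnorm_le {d : ℕ} (m : Fin d → Fin d → ℝ) : mnorm m ≤ ∑ i, ∑ j, |m i j| := by
  unfold mnorm
  have h0 : 0 ≤ ∑ i, ∑ j, |m i j| := Finset.sum_nonneg fun i _ => Finset.sum_nonneg fun j _ => abs_nonneg _
  rw [Real.sqrt_le_left h0]
  simp only [← Finset.sum_product']
  have := Finset.sum_sq_le_sq_sum_of_nonneg (s := Finset.univ ×ˢ Finset.univ) (f := fun p : Fin d × Fin d => |m p.1 p.2|) (fun _ _ => abs_nonneg _)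
  simpa [sq_abs] using this

lemma osc_le {d : ℕ} {u : Pt d → ℝ} (hu : CinfC u) {ρ : ℝ} :
    ENNReal.ofReal (oscC (cyl d ρ 0 0) (fun z i j => Dxx i j u z)) ≤
      ∑ i, ∑ j, ∫⁻ z₁, ∫⁻ z₂, ‖Dxx i j u z₁ - Dxx i j u z₂‖ₑ ∂(Pm d ρ) ∂(Pm d ρ) := by
  have hm : ∀ i j, Measurable (Dxx i j u) := fun i j => (Dxx_C hu i j).gd.m
  have hm2 : ∀ i j, Measurable fun p : Pt d × Pt d => ‖Dxx i j u p.1 - Dxx i j u p.2‖ₑ := fun i j =>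
    (((hm i j).comp measurable_fst).sub ((hm i j).comp measurable_snd)).enorm
  unfold oscC
  simp only [ave_Pm]
  refine (Real.ofReal_le_enorm _).trans ((enorm_integral_le_lintegral_enorm _).trans ?_)
  have : SFinite (Pm d ρ) := by unfold Pm; infer_instance
  have e : ∑ i, ∑ j, ∫⁻ z₁, ∫⁻ z₂, ‖Dxx i j u z₁ - Dxx i j u z₂‖ₑ ∂(Pm d ρ) ∂(Pm d ρ) =
      ∫⁻ z₁, ∫⁻ z₂, ∑ i, ∑ j, ‖Dxx i j u z₁ - Dxx i j u z₂‖ₑ ∂(Pm d ρ) ∂(Pm d ρ) := by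
    have hm3 : ∀ z₁ i j, Measurable fun z₂ : Pt d => ‖Dxx i j u z₁ - Dxx i j u z₂‖ₑ := fun z₁ i j =>
      (measurable_const.sub (hm i j)).enorm
    have e1 : ∀ z₁, ∫⁻ z₂, ∑ i, ∑ j, ‖Dxx i j u z₁ - Dxx i j u z₂‖ₑ ∂(Pm d ρ) =
        ∑ i, ∑ j, ∫⁻ z₂, ‖Dxx i j u z₁ - Dxx i j u z₂‖ₑ ∂(Pm d ρ) := fun z₁ => by
      rw [lintegral_finsetSum _ fun i _ => Finset.measurable_sum _ fun j _ => hm3 z₁ i j]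
      refine Finset.sum_congr rfl fun i _ => ?_
      rw [lintegral_finsetSum _ fun j _ => hm3 z₁ i j]
    simp only [e1]
    rw [lintegral_finsetSum _ fun i _ => Finset.measurable_sum _ fun j _ => (hm2 i j).lintegral_prod_right']
    refine Finset.sum_congr rfl fun i _ => ?_
    rw [lintegral_finsetSum _ fun j _ => (hm2 i j).lintegral_prod_right']
  rw [e]
  refine lintegral_mono fun z₁ => (enorm_integral_le_lintegral_enorm _).trans (lintegral_mono fun z₂ => ?_)
  rw [Real.enorm_eq_ofReal (show 0 ≤ mnorm _ from Real.sqrt_nonneg _)]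
  refine (ENNReal.ofReal_le_ofReal (mnorm_le _)).trans (le_of_eq ?_)
  rw [ENNReal.ofReal_sum_of_nonneg fun i _ => Finset.sum_nonneg fun j _ => abs_nonneg _]
  refine Finset.sum_congr rfl fun i _ => ?_
  rw [ENNReal.ofReal_sum_of_nonneg fun j _ => abs_nonneg _]
  refine Finset.sum_congr rfl fun j _ => ?_
  rw [Real.enorm_eq_ofReal_abs]

lemma Gd.ind {d : ℕ} {g : Pt d → ℝ} (h : Gd g) {s : Set (Pt d)} (hs : MeasurableSet s) : Gd (s.indicator g) := by
  have := h.mul (g := s.indicator fun _ => (1 : ℝ)) (measurable_const.indicator hs) (B := 1) (fun z => by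
    by_cases hz : z ∈ s <;> simp [hz])
  convert this using 2 with z
  by_cases hz : z ∈ s <;> simp [hz]

lemma near {d : ℕ} {δ : ℝ} {a : ℝ → Matrix (Fin d) (Fin d) ℝ} (h : Adm δ a) {ε : ℝ} (hε : 0 < ε) (k m : Fin d)
    {f : Pt d → ℝ} (hf : Gd f) {ρ κ : ℝ} (hρ : 0 < ρ) (hκ : 2 ≤ κ) :
    ∫⁻ z, ‖VV a ε k m ((cyl d (κ * ρ) 0 0).indicator f) z‖ₑ ∂(Pm d ρ) ≤
      ENNReal.ofReal ((4 * Real.pi ^ 2 * δ)⁻¹ * (κ ^ (((d : ℝ) + 2) / 2) *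
        Real.sqrt (⨍ z in cyl d (κ * ρ) 0 0, f z ^ 2))) := by
  have hκ0 : 0 < κ := by linarith
  have hδ := h.p
  set C' := cyl d (κ * ρ) 0 0 with hC'
  set g := C'.indicator f with hg
  have hgd : Gd g := hf.ind (cyl_meas _ _ _ _)
  have := Pm_prob d hρ
  have hVm := (VV_meas h ε k m hgd).enorm
  have c1 := cs_enn (Pm d ρ) (f := fun z => ‖VV a ε k m g z‖ₑ) (g := fun _ => 1) hVm.aemeasurable aemeasurable_const
  simp only [mul_one, one_pow, lintegral_const, measure_univ] at c1
  have hA : 0 ≤ ⨍ z in C', f z ^ 2 := by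
    rw [average]; exact integral_nonneg fun z => sq_nonneg _
  have hf2 : Integrable (fun z => f z ^ 2) := by
    obtain ⟨M, T, hM, hb⟩ := hf.b
    have := hf.mul hf.m (B := M) (fun z => (hb z).trans (indicator_le_self' (fun _ _ => hM) _))
    simpa [sq] using this.ig
  have c2 : ∫⁻ w, ‖g w‖ₑ ^ 2 = volume C' * ENNReal.ofReal (⨍ z in C', f z ^ 2) := by
    have hv := vol_cyl_top d (R := κ * ρ) (by positivity)
    have hv0 := vol_cyl_pos d (R := κ * ρ) (by positivity)
    rw [setAverage_eq, smul_eq_mul, ENNReal.ofReal_mul (by positivity), ← mul_assoc]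
    rw [Measure.real, ENNReal.ofReal_inv_of_pos (ENNReal.toReal_pos hv0 hv), ENNReal.ofReal_toReal hv,
      ENNReal.mul_inv_cancel hv0 hv, one_mul, ofReal_integral_eq_lintegral_ofReal hf2.integrableOn (Filter.Eventually.of_forall fun _ => sq_nonneg _),
      ← lintegral_indicator (cyl_meas _ _ _ _)]
    refine lintegral_congr fun w => ?_
    by_cases hw : w ∈ C'
    · rw [hg, indicator_of_mem hw, indicator_of_mem hw, Real.enorm_eq_ofReal_abs, ← ENNReal.ofReal_pow (abs_nonneg _), sq_abs]
    · rw [hg, indicator_of_notMem hw, indicator_of_notMem hw]; simp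
  have c3 : ∫⁻ z, ‖VV a ε k m g z‖ₑ ^ 2 ∂(Pm d ρ) ≤ (volume (cyl d ρ 0 0))⁻¹ * (ENNReal.ofReal ((4 * Real.pi ^ 2 * δ)⁻¹) ^ 2 *
      (volume C' * ENNReal.ofReal (⨍ z in C', f z ^ 2))) := by
    rw [← c2]
    unfold Pm
    rw [lintegral_smul_measure, smul_eq_mul]
    gcongr
    exact (setLIntegral_le_lintegral _ _).trans (VV_L2 h hε k m hgd)
  have c4 : volume C' = ENNReal.ofReal (κ ^ (d + 2)) * volume (cyl d ρ 0 0) := by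
    rw [hC', vol_cyl d (by positivity), vol_cyl d hρ, mul_pow, ENNReal.ofReal_mul (by positivity), mul_assoc]
  have c5 : (κ ^ (((d : ℝ) + 2) / 2)) ^ 2 = κ ^ (d + 2) := by
    rw [← Real.rpow_natCast, ← Real.rpow_mul hκ0.le, ← Real.rpow_natCast]
    congr 1; push_cast; ring
  rw [← ENNReal.pow_le_pow_left_iff (n := 2) two_ne_zero]
  refine c1.trans (c3.trans (le_of_eq ?_))
  have c6 : ENNReal.ofReal ((4 * Real.pi ^ 2 * δ)⁻¹ * (κ ^ (((d : ℝ) + 2) / 2) * Real.sqrt (⨍ z in C', f z ^ 2))) ^ 2 =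
      ENNReal.ofReal ((4 * Real.pi ^ 2 * δ)⁻¹) ^ 2 * (ENNReal.ofReal (κ ^ (d + 2)) * ENNReal.ofReal (⨍ z in C', f z ^ 2)) := by
    rw [← ENNReal.ofReal_pow (by positivity), mul_pow, mul_pow, c5, Real.sq_sqrt hA, ENNReal.ofReal_mul (by positivity),
      ENNReal.ofReal_mul (by positivity), ENNReal.ofReal_pow (by positivity)]
  rw [c6, c4]
  have := ENNReal.inv_mul_cancel (vol_cyl_pos d hρ) (vol_cyl_top d hρ)
  calc _ = ((volume (cyl d ρ 0 0))⁻¹ * volume (cyl d ρ 0 0)) * (ENNReal.ofReal ((4 * Real.pi ^ 2 * δ)⁻¹) ^ 2 *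
      (ENNReal.ofReal (κ ^ (d + 2)) * ENNReal.ofReal (⨍ z in C', f z ^ 2))) := by ring
    _ = _ := by rw [this, one_mul]

lemma far (d : ℕ) {δ : ℝ} (hδ : 0 < δ) : ∃ N : ℝ, 0 < N ∧ ∀ a : ℝ → Matrix (Fin d) (Fin d) ℝ, Adm δ a →
    ∀ (k m : Fin d) (ρ κ ε : ℝ), 0 < ρ → 2 ≤ κ → 0 < ε → ε ≤ ρ ^ 2 → ∀ z1 ∈ cyl d ρ 0 0, ∀ z2 ∈ cyl d ρ 0 0,
    ∀ f : Pt d → ℝ, Gd f →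
    ‖VV a ε k m ((cyl d (κ * ρ) 0 0)ᶜ.indicator f) z1 - VV a ε k m ((cyl d (κ * ρ) 0 0)ᶜ.indicator f) z2‖ₑ ≤
      ENNReal.ofReal (N * κ⁻¹) * maxF 0 (fun z => |f z|) (0, 0) := by
  obtain ⟨N1, hN1, H1⟩ := ker_diff d hδ
  obtain ⟨N2, hN2, H2⟩ := far_int d
  refine ⟨N1 * N2, by positivity, fun a h k m ρ κ ε hρ hκ hε hε2 z1 hz1 z2 hz2 f hf => ?_⟩
  have hκ0 : 0 < κ := by linarith
  set C' := cyl d (κ * ρ) 0 0 with hC'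
  have hgd : Gd (C'ᶜ.indicator f) := hf.ind (cyl_meas _ _ _ _).compl
  unfold VV
  rw [← integral_sub (VV_int h hε k m hgd z1) (VV_int h hε k m hgd z2)]
  refine (enorm_integral_le_lintegral_enorm _).trans ?_
  have hS : MeasurableSet {w : Pt d | 0 < w.1 ∧ κ * ρ ≤ prho w} :=
    (measurableSet_lt measurable_const measurable_fst).inter (measurableSet_le measurable_const prho_cont.measurable)
  calc _ ≤ ∫⁻ w, {w : Pt d | 0 < w.1 ∧ κ * ρ ≤ prho w}.indicator (fun w => ENNReal.ofReal (N1 * ρ) * (ENNReal.ofReal |f w| * ENNReal.ofReal (1 / prho w ^ (d + 3)))) w := by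
        refine lintegral_mono fun w => ?_
        by_cases hw : w ∈ C'
        · simp [hw]
        · have hk := H1 a h k m ρ κ ε hρ hκ hε hε2 z1 hz1 z2 hz2 w hw
          rw [← sub_mul, enorm_mul, ← ofReal_norm]
          by_cases h0 : 0 < w.1
          · rw [if_pos h0] at hk
            have hp := far_prho h0 hw
            rw [indicator_of_mem (show w ∈ {w : Pt d | 0 < w.1 ∧ κ * ρ ≤ prho w} from ⟨h0, hp⟩), indicator_of_mem (show w ∈ C'ᶜ from hw)]
            rw [← ofReal_norm, Complex.norm_real, Real.norm_eq_abs]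
            have hk2 : ENNReal.ofReal ‖ker a ε k m z1 w - ker a ε k m z2 w‖ ≤
                ENNReal.ofReal (N1 * ρ) * ENNReal.ofReal (1 / prho w ^ (d + 3)) := by
              rw [← ENNReal.ofReal_mul (by positivity)]
              exact ENNReal.ofReal_le_ofReal (hk.trans (le_of_eq (by ring)))
            refine (mul_le_mul_left hk2 _).trans (le_of_eq ?_)
            ring
          · rw [if_neg h0] at hk
            rw [show ‖ker a ε k m z1 w - ker a ε k m z2 w‖ = 0 from le_antisymm hk (norm_nonneg _)]
            simp
    _ = ENNReal.ofReal (N1 * ρ) * ∫⁻ w in {w : Pt d | 0 < w.1 ∧ κ * ρ ≤ prho w}, ENNReal.ofReal |f w| * ENNReal.ofReal (1 / prho w ^ (d + 3)) := by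
        rw [lintegral_indicator hS, lintegral_const_mul']
        exact ENNReal.ofReal_ne_top
    _ ≤ ENNReal.ofReal (N1 * ρ) * (ENNReal.ofReal (N2 / (κ * ρ)) * maxF 0 (fun z => |f z|) (0, 0)) := by
        gcongr
        exact H2 (fun z => |f z|) (κ * ρ) (by positivity)
    _ = _ := by
        rw [← mul_assoc, ← ENNReal.ofReal_mul (by positivity)]
        congr 2
        field_simp

lemma VV_split {d : ℕ} {δ : ℝ} {a : ℝ → Matrix (Fin d) (Fin d) ℝ} (h : Adm δ a) {ε : ℝ} (hε : 0 < ε) (k m : Fin d)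
    {f : Pt d → ℝ} (hf : Gd f) {s : Set (Pt d)} (hs : MeasurableSet s) (z : Pt d) :
    VV a ε k m f z = VV a ε k m (s.indicator f) z + VV a ε k m (sᶜ.indicator f) z := by
  unfold VV
  rw [← integral_add (VV_int h hε k m (hf.ind hs) z) (VV_int h hε k m (hf.ind hs.compl) z)]
  refine integral_congr_ae (Filter.Eventually.of_forall fun w => ?_)
  by_cases hw : w ∈ s <;> simp [hw]

lemma pair_bound {d : ℕ} {δ : ℝ} {N : ℝ} (hδ : 0 < δ) (hN : 0 < N)
    (HN : ∀ a : ℝ → Matrix (Fin d) (Fin d) ℝ, Adm δ a →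
    ∀ (k m : Fin d) (ρ κ ε : ℝ), 0 < ρ → 2 ≤ κ → 0 < ε → ε ≤ ρ ^ 2 → ∀ z1 ∈ cyl d ρ 0 0, ∀ z2 ∈ cyl d ρ 0 0,
    ∀ f : Pt d → ℝ, Gd f →
    ‖VV a ε k m ((cyl d (κ * ρ) 0 0)ᶜ.indicator f) z1 - VV a ε k m ((cyl d (κ * ρ) 0 0)ᶜ.indicator f) z2‖ₑ ≤
      ENNReal.ofReal (N * κ⁻¹) * maxF 0 (fun z => |f z|) (0, 0))
    {a : ℝ → Matrix (Fin d) (Fin d) ℝ} (h : Adm δ a) {u : Pt d → ℝ} (hu : CinfC u) {κ ρ : ℝ} (hκ : 2 ≤ κ) (hρ : 0 < ρ)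
    (k m : Fin d) :
    ∫⁻ z₁, ∫⁻ z₂, ‖Dxx k m u z₁ - Dxx k m u z₂‖ₑ ∂(Pm d ρ) ∂(Pm d ρ) ≤
      ENNReal.ofReal (2 * δ⁻¹ * κ ^ (((d : ℝ) + 2) / 2) * Real.sqrt (⨍ z in cyl d (κ * ρ) 0 0, Lu a u z ^ 2)) +
      ENNReal.ofReal (4 * Real.pi ^ 2 * N * κ⁻¹) * maxF 0 (fun z => |Lu a u z|) (0, 0) := by
  have hκ0 : 0 < κ := by linarith
  have hP := Pm_prob d hρ
  have hf := Lu_gd h hu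
  set f := Lu a u with hfdef
  set C' := cyl d (κ * ρ) 0 0 with hC'
  have hCm : MeasurableSet C' := cyl_meas _ _ _ _
  set c : ℕ → ℝ := fun n => n + (1 + 1 / ρ ^ 2) with hc
  set ep : ℕ → ℝ := fun n => (4 * Real.pi ^ 2 * c n)⁻¹ with hep
  have hcpos : ∀ n, 0 < c n := fun n => by simp only [hc]; positivity
  have hep0 : ∀ n, 0 < ep n := fun n => by have := hcpos n; simp only [hep]; positivity
  have hep1 : ∀ n, ep n ≤ ρ ^ 2 := fun n => by
    have h1 : 1 / ρ ^ 2 ≤ c n := by simp only [hc]; linarith [(Nat.cast_nonneg n : (0:ℝ) ≤ n)]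
    have h2 : c n ≤ 4 * Real.pi ^ 2 * c n := by
      have := Real.pi_gt_three
      have h4 : (1 : ℝ) ≤ 4 * Real.pi ^ 2 := by nlinarith
      exact le_mul_of_one_le_left (hcpos n).le h4
    have h3 : (4 * Real.pi ^ 2 * c n)⁻¹ ≤ (1 / ρ ^ 2)⁻¹ := inv_anti₀ (by positivity) (h1.trans h2)
    rwa [one_div, inv_inv] at h3
  have hctop : Filter.Tendsto c Filter.atTop Filter.atTop :=
    Filter.tendsto_atTop_add_const_right _ _ tendsto_natCast_atTop_atTop
  set V : ℕ → Pt d → ℂ := fun n z => ((4 * Real.pi ^ 2 : ℝ) : ℂ) * VV a (ep n) k m f z with hV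
  have hVt : ∀ z, Filter.Tendsto (fun n => V n z) Filter.atTop (nhds (Dxx k m u z : ℂ)) := fun z =>
    (repr_tendsto h hu k m z).comp hctop
  have hVm : ∀ n, Measurable (V n) := fun n => (VV_meas h (ep n) k m hf).const_mul _
  have hDm : Measurable (Dxx k m u) := (Dxx_C hu k m).gd.m
  have hG : ∀ n, Measurable fun p : Pt d × Pt d => ‖V n p.1 - V n p.2‖ₑ := fun n =>
    (((hVm n).comp measurable_fst).sub ((hVm n).comp measurable_snd)).enorm
  rw [← lintegral_prod (fun p : Pt d × Pt d => ‖Dxx k m u p.1 - Dxx k m u p.2‖ₑ)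
    ((hDm.comp measurable_fst).sub (hDm.comp measurable_snd)).enorm.aemeasurable]
  set R : ℝ≥0∞ := ENNReal.ofReal (2 * δ⁻¹ * κ ^ (((d : ℝ) + 2) / 2) * Real.sqrt (⨍ z in C', f z ^ 2)) +
      ENNReal.ofReal (4 * Real.pi ^ 2 * N * κ⁻¹) * maxF 0 (fun z => |f z|) (0, 0) with hR
  have hlim : ∀ p : Pt d × Pt d, ‖Dxx k m u p.1 - Dxx k m u p.2‖ₑ =
      Filter.liminf (fun n => ‖V n p.1 - V n p.2‖ₑ) Filter.atTop := fun p => by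
    have := (((hVt p.1).sub (hVt p.2)).enorm).liminf_eq
    rw [this, ← Complex.ofReal_sub, ← ofReal_norm, ← ofReal_norm, Complex.norm_real]
  simp only [hlim]
  refine (lintegral_liminf_le hG).trans ?_
  have key : ∀ n, ∫⁻ p, ‖V n p.1 - V n p.2‖ₑ ∂((Pm d ρ).prod (Pm d ρ)) ≤ R := fun n => by
    set W : Pt d → ℂ := fun z => ((4 * Real.pi ^ 2 : ℝ) : ℂ) * VV a (ep n) k m (C'.indicator f) z with hW
    have hWm : Measurable W := (VV_meas h (ep n) k m (hf.ind hCm)).const_mul _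
    set B : ℝ≥0∞ := ENNReal.ofReal (4 * Real.pi ^ 2 * N * κ⁻¹) * maxF 0 (fun z => |f z|) (0, 0) with hB
    have hpi : ‖((4 * Real.pi ^ 2 : ℝ) : ℂ)‖ₑ = ENNReal.ofReal (4 * Real.pi ^ 2) := by
      rw [← ofReal_norm, Complex.norm_real, Real.norm_eq_abs, abs_of_pos (by positivity)]
    have pw : ∀ z1 ∈ cyl d ρ 0 0, ∀ z2 ∈ cyl d ρ 0 0, ‖V n z1 - V n z2‖ₑ ≤ ‖W z1‖ₑ + ‖W z2‖ₑ + B := by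
      intro z1 hz1 z2 hz2
      have hfar := HN a h k m ρ κ (ep n) hρ hκ (hep0 n) (hep1 n) z1 hz1 z2 hz2 f hf
      have e : V n z1 - V n z2 = W z1 + -W z2 + ((4 * Real.pi ^ 2 : ℝ) : ℂ) *
          (VV a (ep n) k m (C'ᶜ.indicator f) z1 - VV a (ep n) k m (C'ᶜ.indicator f) z2) := by
        simp only [hV, hW]
        rw [VV_split h (hep0 n) k m hf hCm z1, VV_split h (hep0 n) k m hf hCm z2]
        ring
      rw [e]
      refine (enorm_add_le _ _).trans (add_le_add ((enorm_add_le _ _).trans_eq (by rw [enorm_neg])) ?_)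
      rw [enorm_mul, hpi]
      refine (mul_le_mul_right hfar _).trans (le_of_eq ?_)
      rw [hB, ← mul_assoc, ← ENNReal.ofReal_mul (by positivity), mul_assoc (4 * Real.pi ^ 2) N]
    have hcyl : ∀ᵐ z ∂(Pm d ρ), z ∈ cyl d ρ 0 0 := by
      unfold Pm
      exact Measure.ae_smul_measure (ae_restrict_mem (cyl_meas _ _ _ _)) _
    have hnear : ∫⁻ z, ‖W z‖ₑ ∂(Pm d ρ) ≤ ENNReal.ofReal (δ⁻¹ * κ ^ (((d : ℝ) + 2) / 2) * Real.sqrt (⨍ z in C', f z ^ 2)) := by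
      simp only [hW, enorm_mul, hpi]
      rw [lintegral_const_mul' _ _ ENNReal.ofReal_ne_top]
      refine (mul_le_mul_right (near h (hep0 n) k m hf hρ hκ) _).trans (le_of_eq ?_)
      rw [← ENNReal.ofReal_mul (by positivity)]
      congr 1
      field_simp
      rfl
    rw [lintegral_prod _ (hG n).aemeasurable]
    calc _ ≤ ∫⁻ z1, ∫⁻ z2, (‖W z1‖ₑ + ‖W z2‖ₑ + B) ∂(Pm d ρ) ∂(Pm d ρ) := by
          refine lintegral_mono_ae ?_
          filter_upwards [hcyl] with z1 hz1
          refine lintegral_mono_ae ?_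
          filter_upwards [hcyl] with z2 hz2
          exact pw z1 hz1 z2 hz2
      _ = ∫⁻ z, ‖W z‖ₑ ∂(Pm d ρ) + ∫⁻ z, ‖W z‖ₑ ∂(Pm d ρ) + B := by
          have i1 : ∀ z1, ∫⁻ z2, (‖W z1‖ₑ + ‖W z2‖ₑ + B) ∂(Pm d ρ) = ‖W z1‖ₑ + (∫⁻ z, ‖W z‖ₑ ∂(Pm d ρ) + B) := fun z1 => by
            rw [lintegral_add_right _ measurable_const, lintegral_add_left measurable_const]
            simp [add_assoc]
          simp only [i1]
          rw [lintegral_add_right _ measurable_const]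
          simp [add_assoc]
      _ ≤ _ := by
          rw [hR]
          refine add_le_add ((add_le_add hnear hnear).trans (le_of_eq ?_)) le_rfl
          rw [← ENNReal.ofReal_add (by positivity) (by positivity)]
          congr 1; ring
  calc _ ≤ Filter.liminf (fun _ : ℕ => R) Filter.atTop := Filter.liminf_le_liminf (Filter.Eventually.of_forall key)
    _ = R := by simp

theorem stmt5 (d : ℕ) (hd : 1 ≤ d) (δ : ℝ) (hδ0 : 0 < δ) (hδ1 : δ ≤ 1) :
    ∃ N : ℝ, 0 < N ∧
      ∀ a : ℝ → Matrix (Fin d) (Fin d) ℝ, Measurable a → (∀ t, inS d δ (a t)) →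
      ∀ u : Pt d → ℝ, CinfC u → ∀ κ : ℝ, 2 ≤ κ → ∀ ρ : ℝ, 0 < ρ →
        ENNReal.ofReal (oscC (cyl d ρ 0 0) (fun z i j => Dxx i j u z)) ≤
          ENNReal.ofReal (N * κ ^ (((d : ℝ) + 2) / 2) *
            Real.sqrt (⨍ z in cyl d (κ * ρ) 0 0,
              (Dt u z + ∑ i, ∑ j, a z.1 i j * Dxx i j u z) ^ 2)) +
          ENNReal.ofReal (N * κ⁻¹) *
            maxF 0 (fun z => |Dt u z + ∑ i, ∑ j, a z.1 i j * Dxx i j u z|) (0, 0) := by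
  obtain ⟨N, hN, HN⟩ := far d hδ0
  have hd0 : (0 : ℝ) < d := by exact_mod_cast hd
  refine ⟨d * d * (2 * δ⁻¹ + 4 * Real.pi ^ 2 * N), by positivity, fun a ha has u hu κ hκ ρ hρ => ?_⟩
  have hκ0 : 0 < κ := by linarith
  have h : Adm δ a := ⟨ha, has, hδ0, hδ1⟩
  change _ ≤ ENNReal.ofReal (_ * Real.sqrt (⨍ z in cyl d (κ * ρ) 0 0, Lu a u z ^ 2)) +
    _ * maxF 0 (fun z => |Lu a u z|) (0, 0)
  refine (osc_le hu).trans ((Finset.sum_le_sum fun k _ => Finset.sum_le_sum fun m _ =>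
    pair_bound hδ0 hN HN h hu hκ hρ k m).trans ?_)
  simp only [Finset.sum_const, Finset.card_univ, Fintype.card_fin, nsmul_eq_mul]
  rw [mul_add, mul_add]
  have hdn : (d : ℝ≥0∞) = ENNReal.ofReal (d : ℝ) := by simp
  rw [hdn]
  refine add_le_add ?_ ?_
  · rw [← ENNReal.ofReal_mul (by positivity), ← ENNReal.ofReal_mul (by positivity)]
    refine ENNReal.ofReal_le_ofReal ?_
    set X := Real.sqrt (⨍ z in cyl d (κ * ρ) 0 0, Lu a u z ^ 2)
    have hX : 0 ≤ X := Real.sqrt_nonneg _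
    have hp : (0:ℝ) ≤ d * d * (4 * Real.pi ^ 2 * N) * (κ ^ (((d : ℝ) + 2) / 2) * X) := by positivity
    linarith
  · rw [← mul_assoc, ← mul_assoc, ← ENNReal.ofReal_mul (by positivity), ← ENNReal.ofReal_mul (by positivity)]
    refine mul_le_mul_left (ENNReal.ofReal_le_ofReal ?_) _
    have hp : (0:ℝ) ≤ d * d * (2 * δ⁻¹) * κ⁻¹ := by positivity
    linarith
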